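/- There exists a constant C > 0 depending only on α, γ, μ such that the following holds. Let (u⁰, u¹), with u⁰, u¹ ∈ C^{1,2+α}([0,T]×ℝ), be the unique solution of the PDDE Cauchy problem with data λ⁰, λ¹ ∈ C^α([0,T]×ℝ), g⁰, g¹ ∈ C^{2+α}(ℝ) and parameters γ, μ > 0, and set M₀ = γ·max(‖g⁰‖₀,‖g¹‖₀) + ½T·max(‖λ⁰‖₀,‖λ¹‖₀)² + μT and M_α = γ·max(‖g⁰‖_{2+α},‖g¹‖_{2+α}) + (T+1)·(½·max(‖λ⁰‖_α,‖λ¹‖_α)² + μ). Then, with all norms/seminorms below taken as the maximum over the two slices u⁰, u¹: [u]_α ≤ C·M_α^{2+α/2}·e^{αM₀}, ‖u_x‖₀ ≤ C·M_α^{2+α/2}·e^{M₀}, [u_x]_α ≤ C·M_α^{2+α/2}·e^{(1+α)M₀} and ‖u_x‖_α ≤ C·M_α^{2+α/2}·e^{(1+α)M₀}. -/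

import Mathlib

open Set Filter

noncomputable section

/-- The parabolic distance on `[0,T] × ℝ`:
`d_p((t₁,x₁),(t₂,x₂)) = √|t₁−t₂| + |x₁−x₂|`. -/
def pd (t₁ x₁ t₂ x₂ : ℝ) : ℝ := Real.sqrt |t₁ - t₂| + |x₁ - x₂|

/-- Sup-norm `‖u‖₀` of `u` over `[0,T] × ℝ`. -/
def supN (T : ℝ) (u : ℝ → ℝ → ℝ) : ℝ :=
  sInf {M : ℝ | 0 ≤ M ∧ ∀ t ∈ Icc (0:ℝ) T, ∀ x : ℝ, |u t x| ≤ M}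

/-- One-sided supremum `sup u` of `u` over `[0,T] × ℝ`. -/
def supU (T : ℝ) (u : ℝ → ℝ → ℝ) : ℝ :=
  sInf {M : ℝ | ∀ t ∈ Icc (0:ℝ) T, ∀ x : ℝ, u t x ≤ M}

/-- The parabolic `α`-Hölder seminorm `[u]_α` of `u` over `[0,T] × ℝ`. -/
def hSemi (T α : ℝ) (u : ℝ → ℝ → ℝ) : ℝ :=
  sInf {K : ℝ | 0 ≤ K ∧ ∀ t₁ ∈ Icc (0:ℝ) T, ∀ t₂ ∈ Icc (0:ℝ) T, ∀ x₁ x₂ : ℝ,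
    |u t₁ x₁ - u t₂ x₂| ≤ K * pd t₁ x₁ t₂ x₂ ^ α}

/-- The Hölder norm `‖u‖_α = ‖u‖₀ + [u]_α`. -/
def hNorm (T α : ℝ) (u : ℝ → ℝ → ℝ) : ℝ := supN T u + hSemi T α u

/-- The weighted sup-norm `‖u‖_β = sup_{(t,x)} e^{−β(T−t)} |u(t,x)|`. -/
def wNorm (T β : ℝ) (u : ℝ → ℝ → ℝ) : ℝ :=
  sInf {M : ℝ | 0 ≤ M ∧ ∀ t ∈ Icc (0:ℝ) T, ∀ x : ℝ, Real.exp (-β * (T - t)) * |u t x| ≤ M}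

/-- Membership in `C^α([0,T]×ℝ)`: bounded, continuous, with finite parabolic
`α`-Hölder constant. -/
def MemCa (T α : ℝ) (u : ℝ → ℝ → ℝ) : Prop :=
  ContinuousOn (fun p : ℝ × ℝ => u p.1 p.2) (Icc (0:ℝ) T ×ˢ (univ : Set ℝ)) ∧
  (∃ M : ℝ, ∀ t ∈ Icc (0:ℝ) T, ∀ x : ℝ, |u t x| ≤ M) ∧
  (∃ K : ℝ, ∀ t₁ ∈ Icc (0:ℝ) T, ∀ t₂ ∈ Icc (0:ℝ) T, ∀ x₁ x₂ : ℝ,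
    |u t₁ x₁ - u t₂ x₂| ≤ K * pd t₁ x₁ t₂ x₂ ^ α)

/-- Membership in `C^{1,2+α}([0,T]×ℝ)`: `u ∈ C^α`, and the partial derivatives
`u_t`, `u_x`, `u_xx` exist on `(0,T) × ℝ` and are (extended to) the `C^α` functions
`ut`, `ux`, `uxx`. -/
structure MemC12a (T α : ℝ) (u ut ux uxx : ℝ → ℝ → ℝ) : Prop where
  memU : MemCa T α u
  memUt : MemCa T α ut
  memUx : MemCa T α ux
  memUxx : MemCa T α uxx
  hasUt : ∀ t ∈ Ioo (0:ℝ) T, ∀ x : ℝ, HasDerivAt (fun s => u s x) (ut t x) t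
  hasUx : ∀ t ∈ Ioo (0:ℝ) T, ∀ x : ℝ, HasDerivAt (fun y => u t y) (ux t x) x
  hasUxx : ∀ t ∈ Ioo (0:ℝ) T, ∀ x : ℝ, HasDerivAt (fun y => ux t y) (uxx t x) x

/-- Sup-norm `‖g‖₀` of a function `g : ℝ → ℝ`. -/
def gSupN (g : ℝ → ℝ) : ℝ := sInf {M : ℝ | 0 ≤ M ∧ ∀ x : ℝ, |g x| ≤ M}

/-- `α`-Hölder constant of a function `g : ℝ → ℝ`. -/
def gHSemi (α : ℝ) (g : ℝ → ℝ) : ℝ :=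
  sInf {K : ℝ | 0 ≤ K ∧ ∀ x y : ℝ, |g x - g y| ≤ K * |x - y| ^ α}

/-- Membership in `C^{2+α}(ℝ)`: twice continuously differentiable, with `g`, `g'`, `g''`
bounded and `g''` `α`-Hölder. -/
def MemC2a (α : ℝ) (g : ℝ → ℝ) : Prop :=
  ContDiff ℝ 2 g ∧
  (∃ M : ℝ, ∀ x : ℝ, |g x| ≤ M ∧ |deriv g x| ≤ M ∧ |deriv (deriv g) x| ≤ M) ∧
  (∃ K : ℝ, ∀ x y : ℝ, |deriv (deriv g) x - deriv (deriv g) y| ≤ K * |x - y| ^ α)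

/-- The `C^{2+α}(ℝ)` norm: `‖g‖_{2+α} = ‖g‖₀ + ‖g'‖₀ + ‖g''‖₀ + [g'']_α`. -/
def gNorm2a (α : ℝ) (g : ℝ → ℝ) : ℝ :=
  gSupN g + gSupN (deriv g) + gSupN (deriv (deriv g)) + gHSemi α (deriv (deriv g))

/-- `(u0, u1)` (with derivative extensions) solves the PDDE Cauchy problem with data
`(λ⁰, λ¹, g⁰, g¹, γ, μ)`:
`0 = u¹_t + ½u¹_xx − λ¹ u¹_x + (λ¹)²/(2γ)` on `[0,T) × ℝ`, `u¹(T,·) = g¹`, and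
`0 = u⁰_t + ½u⁰_xx − λ⁰ u⁰_x + (λ⁰)²/(2γ) − (μ/γ)(e^{−γ(u¹−u⁰)} − 1)` on `[0,T) × ℝ`,
`u⁰(T,·) = g⁰`, both slices being of class `C^{1,2+α}`. -/
def SolvesPDDE (T α γ μ : ℝ) (lam0 lam1 : ℝ → ℝ → ℝ) (g0 g1 : ℝ → ℝ)
    (u0 u0t u0x u0xx u1 u1t u1x u1xx : ℝ → ℝ → ℝ) : Prop :=
  MemC12a T α u0 u0t u0x u0xx ∧ MemC12a T α u1 u1t u1x u1xx ∧
  (∀ t ∈ Ico (0:ℝ) T, ∀ x : ℝ,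
    u1t t x + (1/2) * u1xx t x - lam1 t x * u1x t x + (lam1 t x)^2 / (2*γ) = 0) ∧
  (∀ x : ℝ, u1 T x = g1 x) ∧
  (∀ t ∈ Ico (0:ℝ) T, ∀ x : ℝ,
    u0t t x + (1/2) * u0xx t x - lam0 t x * u0x t x + (lam0 t x)^2 / (2*γ)
      - (μ/γ) * (Real.exp (-γ * (u1 t x - u0 t x)) - 1) = 0) ∧
  (∀ x : ℝ, u0 T x = g0 x)

/-!
The argument is a sequence of maximum principles for `v = γ u`, which satisfies
`v_t + ½ v_xx = λ v_x - ½ λ² + E` with `E = 0` on the second slice and `E = μ (e^{v⁰ - v¹} - 1)` on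
the first. A quadratic penalty gives `|v| ≤ M₀`, so `E` is of order `e^{2 M₀}`. At the length scale
`Y⁻¹` with `Y` a large multiple of `(1 + ‖λ‖_α) e^{M₀}`, both the drift and `E` are small
perturbations of the heat operator. Concave barriers of width `Y⁻¹`, applied to the two-point
difference `v(t, x + r) - v(t, x - r)` and then to the four-point difference
`v(t, x + r + s) - v(t, x + r - s) - v(t, x - r + s) + v(t, x - r - s)`, bound `v_x` by a multiple
of `M_α Y` and `v_xx` by a multiple of `M_α Y²`: the drift contributes at most half of the quantity
being bounded, and the four-point barrier is concave enough to dominate an `α`-Hölder source, such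
as the one formed by `λ` and `E`. Interpolating between the bounds on `v`, `v_x`, `v_xx` and `v_t`
gives the Hölder seminorms as powers of `Y`.
-/

open Topology

/-! ### One-variable calculus -/

lemma hasDerivAt_nonpos_of_isMaxOn_Icc {f : ℝ → ℝ} {f' a b : ℝ} (hab : a < b)
    (hf : HasDerivAt f f' a) (hmax : IsMaxOn f (Icc a b) a) : f' ≤ 0 := by
  have hslope := (hasDerivWithinAt_iff_tendsto_slope' self_notMem_Ioi).1
    (hf.hasDerivWithinAt (s := Ioi a))
  refine le_of_tendsto hslope ?_
  filter_upwards [Ioo_mem_nhdsGT hab] with t ht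
  rw [slope_def_field]
  exact div_nonpos_of_nonpos_of_nonneg (sub_nonpos.2 (hmax ⟨ht.1.le, ht.2.le⟩))
    (sub_nonneg.2 ht.1.le)

lemma hasDerivAt_le_of_le_mul {f : ℝ → ℝ} {f' c δ : ℝ} (hδ : 0 < δ) (hf : HasDerivAt f f' 0)
    (h0 : f 0 = 0) (hle : ∀ s ∈ Icc 0 δ, f s ≤ c * s) : f' ≤ c := by
  have hsub : HasDerivAt (fun s => f s - c * s) (f' - c * 1) 0 :=
    hf.sub ((hasDerivAt_id 0).const_mul c)
  have := hasDerivAt_nonpos_of_isMaxOn_Icc hδ hsub fun s hs => by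
    simpa [h0] using hle s hs
  linarith

lemma hasDerivAt_deriv_nonpos_of_isLocalMax {f f' : ℝ → ℝ} {f'' a : ℝ}
    (hf : ∀ᶠ x in 𝓝 a, HasDerivAt f (f' x) x) (hf' : HasDerivAt f' f'' a)
    (hmax : IsLocalMax f a) : f'' ≤ 0 := by
  by_contra! hpos
  have hderiv : deriv f =ᶠ[𝓝 a] f' := hf.mono fun x hx => hx.deriv
  have hderiv₂ : deriv (deriv f) a = f'' := by rw [hderiv.deriv_eq, hf'.deriv]
  have hmin : IsLocalMin f a :=
    isLocalMin_of_deriv_deriv_pos (hderiv₂ ▸ hpos) hmax.deriv_eq_zero hf.self_of_nhds.continuousAt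
  have hconst : f =ᶠ[𝓝 a] fun _ => f a := by
    filter_upwards [hmax, hmin] with x hle hge using le_antisymm hle hge
  have : deriv (deriv f) a = 0 := by simp [hconst.deriv.deriv_eq]
  linarith

lemma abs_sub_le_of_hasDerivAt_of_abs_le {f f' : ℝ → ℝ} {s : Set ℝ} {c : ℝ} (hs : Convex ℝ s)
    (hf : ∀ x ∈ s, HasDerivAt f (f' x) x) (hbound : ∀ x ∈ s, |f' x| ≤ c) :
    ∀ x ∈ s, ∀ y ∈ s, |f x - f y| ≤ c * |x - y| := fun _ hx _ hy =>
  hs.norm_image_sub_le_of_norm_hasDerivWithin_le (fun z hz => (hf z hz).hasDerivWithinAt)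
    hbound hy hx

lemma abs_exp_sub_exp_le {a b c : ℝ} (ha : a ≤ c) (hb : b ≤ c) :
    |Real.exp a - Real.exp b| ≤ Real.exp c * |a - b| :=
  abs_sub_le_of_hasDerivAt_of_abs_le (convex_Iic c) (fun x _ => Real.hasDerivAt_exp x)
    (fun x hx => by rw [Real.abs_exp]; exact Real.exp_le_exp.2 hx) a ha b hb

lemma abs_deriv_le_of_lipschitz_deriv {f f' : ℝ → ℝ} {D S η : ℝ}
    (hf : ∀ x, HasDerivAt f (f' x) x) (hD : ∀ x, |f x| ≤ D)
    (hS : ∀ x y, |f' x - f' y| ≤ S * |x - y|) (hη : 0 < η) (x : ℝ) :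
    |f' x| ≤ S * η + 2 * D / η := by
  obtain ⟨ξ, hξ, hslope⟩ := exists_hasDerivAt_eq_slope f f' (lt_add_of_pos_right x hη)
    (fun y _ => (hf y).continuousAt.continuousWithinAt) fun y _ => hf y
  have hmean : |f' ξ| ≤ 2 * D / η := by
    rw [hslope, add_sub_cancel_left, abs_div, abs_of_pos hη]
    gcongr
    exact (abs_sub _ _).trans (by linarith [hD (x + η), hD x])
  have hosc : |f' x - f' ξ| ≤ S * η := by
    have hS0 : 0 ≤ S := by simpa using (abs_nonneg _).trans (hS 1 0)
    refine (hS x ξ).trans (mul_le_mul_of_nonneg_left ?_ hS0)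
    rw [abs_sub_comm, abs_of_pos (sub_pos.2 hξ.1)]
    linarith [hξ.2]
  linarith [abs_sub_abs_le_abs_sub (f' x) (f' ξ)]

lemma le_mul_rpow_of_le_of_le_mul {D K q α : ℝ} (hq : 0 ≤ q) (hK : 0 ≤ K) (hα0 : 0 < α)
    (hα1 : α ≤ 1) (hD : D ≤ K) (hDq : D ≤ K * q) : D ≤ K * q ^ α := by
  rcases le_total q 1 with hq1 | hq1
  · exact hDq.trans (by gcongr; exact Real.self_le_rpow_of_le_one hq hq1 hα1)
  · exact hD.trans (le_mul_of_one_le_right hK (Real.one_le_rpow hq1 hα0.le))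

lemma abs_le_two_mul_of_absorption {ι : Type*} {w : ι → ℝ} {c : ℝ}
    (hbdd : ∃ M, ∀ i, |w i| ≤ M)
    (habsorb : ∀ P, 0 ≤ P → (∀ i, |w i| ≤ P) → ∀ i, |w i| ≤ c + P / 2) (i : ι) :
    |w i| ≤ 2 * c := by
  have : Nonempty ι := ⟨i⟩
  obtain ⟨M, hM⟩ := hbdd
  have hle : ∀ j, |w j| ≤ ⨆ k, |w k| := le_ciSup ⟨M, forall_mem_range.2 hM⟩
  have hsup : ⨆ k, |w k| ≤ c + (⨆ k, |w k|) / 2 :=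
    ciSup_le (habsorb _ (Real.iSup_nonneg fun _ => abs_nonneg _) hle)
  linarith [hle i]

/-! ### Maximum principles -/

/-- The function `z` of time and space has, at `(t, x)`, the time derivative `zt` and the second
space derivative `zxx`; near `x` its first space derivative at time `t` is `zx`. -/
structure HasParabolicDerivAt (z : ℝ → ℝ → ℝ) (zt : ℝ) (zx : ℝ → ℝ) (zxx t x : ℝ) : Prop where
  time : HasDerivAt (fun τ => z τ x) zt t
  space : ∀ᶠ y in 𝓝 x, HasDerivAt (z t) (zx y) y
  space₂ : HasDerivAt zx zxx x

namespace HasParabolicDerivAt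

variable {z w : ℝ → ℝ → ℝ} {zt wt zxx wxx t x : ℝ} {zx wx : ℝ → ℝ}

lemma sub (hz : HasParabolicDerivAt z zt zx zxx t x) (hw : HasParabolicDerivAt w wt wx wxx t x) :
    HasParabolicDerivAt (fun τ y => z τ y - w τ y) (zt - wt) (fun y => zx y - wx y) (zxx - wxx)
      t x where
  time := hz.time.sub hw.time
  space := by filter_upwards [hz.space, hw.space] with y hzy hwy using hzy.sub hwy
  space₂ := hz.space₂.sub hw.space₂

lemma const_mul (c : ℝ) (hz : HasParabolicDerivAt z zt zx zxx t x) :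
    HasParabolicDerivAt (fun τ y => c * z τ y) (c * zt) (fun y => c * zx y) (c * zxx) t x where
  time := hz.time.const_mul c
  space := hz.space.mono fun _ hy => hy.const_mul c
  space₂ := hz.space₂.const_mul c

lemma comp_const_add (c : ℝ) (hz : HasParabolicDerivAt z zt zx zxx t (c + x)) :
    HasParabolicDerivAt (fun τ y => z τ (c + y)) zt (fun y => zx (c + y)) zxx t x where
  time := hz.time
  space := ((continuous_const.add continuous_id).tendsto x).eventually hz.space |>.mono
    fun y hy => HasDerivAt.comp_const_add c y hy
  space₂ := HasDerivAt.comp_const_add c x hz.space₂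

lemma comp_const_sub (c : ℝ) (hz : HasParabolicDerivAt z zt zx zxx t (c - x)) :
    HasParabolicDerivAt (fun τ y => z τ (c - y)) zt (fun y => -zx (c - y)) zxx t x where
  time := hz.time
  space := ((continuous_const.sub continuous_id).tendsto x).eventually hz.space |>.mono
    fun y hy => HasDerivAt.comp_const_sub c y hy
  space₂ := by simpa using (HasDerivAt.comp_const_sub c x hz.space₂).fun_neg

lemma heat_nonpos_of_isMaxOn_of_isLocalMax {b : ℝ} (hz : HasParabolicDerivAt z zt zx zxx t x)
    (htb : t < b) (htime : IsMaxOn (fun τ => z τ x) (Icc t b) t) (hspace : IsLocalMax (z t) x) :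
    zt + 1 / 2 * zxx ≤ 0 := by
  linarith [hasDerivAt_nonpos_of_isMaxOn_Icc htb hz.time htime,
    hasDerivAt_deriv_nonpos_of_isLocalMax hz.space hz.space₂ hspace]

end HasParabolicDerivAt

lemma nonpos_of_forall_interior_max_false {X : Type*} [TopologicalSpace X] {a b : ℝ} {K U : Set X}
    {z : ℝ → X → ℝ} (hK : IsCompact K) (hU : IsOpen U) (hUK : U ⊆ K)
    (hz : ContinuousOn (fun p : ℝ × X => z p.1 p.2) (Icc a b ×ˢ K))
    (hterminal : ∀ x ∈ K, z b x ≤ 0) (hlateral : ∀ t ∈ Ico a b, ∀ x ∈ K \ U, z t x ≤ 0)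
    (hinterior : ∀ t ∈ Ico a b, ∀ x ∈ U, 0 < z t x → IsMaxOn (fun τ => z τ x) (Icc t b) t →
      ¬ IsLocalMax (z t) x) :
    ∀ t ∈ Icc a b, ∀ x ∈ K, z t x ≤ 0 := by
  intro t₀ ht₀ x₀ hx₀
  obtain ⟨⟨t, x⟩, ⟨ht, hx⟩, hmax⟩ :=
    (isCompact_Icc.prod hK).exists_isMaxOn ⟨(t₀, x₀), ht₀, hx₀⟩ hz
  have hle : ∀ τ ∈ Icc a b, ∀ y ∈ K, z τ y ≤ z t x := fun τ hτ y hy =>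
    hmax (show (τ, y) ∈ Icc a b ×ˢ K from ⟨hτ, hy⟩)
  refine (hle t₀ ht₀ x₀ hx₀).trans (le_of_not_gt fun hpos => ?_)
  have htb : t < b := ht.2.lt_of_ne (by rintro rfl; exact (hterminal x hx).not_gt hpos)
  have hxU : x ∈ U := by
    by_contra hxU
    exact (hlateral t ⟨ht.1, htb⟩ x ⟨hx, hxU⟩).not_gt hpos
  exact hinterior t ⟨ht.1, htb⟩ x hxU hpos
    (fun τ hτ => hle τ ⟨ht.1.trans hτ.1, hτ.2⟩ x hx)
    ((hU.mem_nhds hxU : U ∈ 𝓝 x) |> mem_of_superset <| fun y hy => hle t ht y (hUK hy))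

/-- The parabolic regularity used by the maximum principle: `u` is continuous on `[0,T] × ℝ` and
`ut`, `ux`, `uxx` are its partial derivatives on `(0,T) × ℝ`. -/
structure HasParabolicDerivs (T : ℝ) (u ut ux uxx : ℝ → ℝ → ℝ) : Prop where
  continuousOn : ContinuousOn (fun p : ℝ × ℝ => u p.1 p.2) (Icc 0 T ×ˢ univ)
  hasDerivAt : ∀ t ∈ Ioo 0 T, ∀ x, HasParabolicDerivAt u (ut t x) (ux t) (uxx t x) t x

namespace HasParabolicDerivs

variable {T : ℝ} {u ut ux uxx : ℝ → ℝ → ℝ}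

lemma const_mul (c : ℝ) (hu : HasParabolicDerivs T u ut ux uxx) :
    HasParabolicDerivs T (fun t x => c * u t x) (fun t x => c * ut t x) (fun t x => c * ux t x)
      (fun t x => c * uxx t x) where
  continuousOn := hu.continuousOn.const_mul c
  hasDerivAt t ht x := (hu.hasDerivAt t ht x).const_mul c

lemma continuousOn_comp {X : Type*} [TopologicalSpace X] {s : Set X} {τ y : X → ℝ}
    (hu : HasParabolicDerivs T u ut ux uxx) (hτ : ContinuousOn τ s) (hy : ContinuousOn y s)
    (hmem : MapsTo τ s (Icc 0 T)) : ContinuousOn (fun p => u (τ p) (y p)) s :=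
  hu.continuousOn.comp (hτ.prodMk hy) fun _ hp => ⟨hmem hp, mem_univ _⟩

end HasParabolicDerivs

/-- The weight `(1 + x²) e^{K(T-t)}`; small multiples of it force a bounded function on the strip
to attain its penalised maximum. -/
def penalty (T K t x : ℝ) : ℝ := (1 + x ^ 2) * Real.exp (K * (T - t))

lemma continuous_penalty (T K : ℝ) : Continuous fun p : ℝ × ℝ => penalty T K p.1 p.2 := by
  unfold penalty
  fun_prop

lemma one_add_sq_le_penalty {T K t : ℝ} (x : ℝ) (hK : 0 ≤ K) (ht : t ≤ T) :
    1 + x ^ 2 ≤ penalty T K t x :=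
  le_mul_of_one_le_right (by positivity) (Real.one_le_exp (mul_nonneg hK (sub_nonneg.2 ht)))

lemma hasParabolicDerivAt_penalty (T K t x : ℝ) :
    HasParabolicDerivAt (penalty T K) (-K * penalty T K t x)
      (fun y => 2 * y * Real.exp (K * (T - t))) (2 * Real.exp (K * (T - t))) t x where
  time := ((((hasDerivAt_id t).const_sub T).const_mul K).exp.const_mul (1 + x ^ 2)).congr_deriv
    (by simp only [penalty, id]; ring)
  space := Eventually.of_forall fun y =>
    (((hasDerivAt_pow 2 y).const_add 1).mul_const _).congr_deriv (by norm_num)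
  space₂ := (((hasDerivAt_id x).const_mul 2).mul_const _).congr_deriv (by ring)

lemma HasParabolicDerivAt.not_isLocalMax_sub_penalty {u : ℝ → ℝ → ℝ} {ux : ℝ → ℝ}
    {ut uxx β T L G κ ε t x : ℝ} (hu : HasParabolicDerivAt u ut ux uxx t x) (hε : 0 < ε)
    (htT : t < T) (hβ : |β| ≤ L) (hsub : -κ ≤ ut + 1 / 2 * uxx - β * ux x)
    (htime : IsMaxOn (fun τ => u τ x - (G + κ * (T - τ)) - ε * penalty T (L + 2) τ x)
      (Icc t T) t) :
    ¬ IsLocalMax (fun y => u t y - (G + κ * (T - t)) - ε * penalty T (L + 2) t y) x := by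
  intro hspace
  have haffine : HasParabolicDerivAt (fun τ _ => G + κ * (T - τ)) (κ * -1) (fun _ => 0) 0 t x :=
    ⟨(((hasDerivAt_id t).const_sub T).const_mul κ).const_add G,
      Eventually.of_forall fun y => hasDerivAt_const y _, hasDerivAt_const x 0⟩
  have hz := (hu.sub haffine).sub ((hasParabolicDerivAt_penalty T (L + 2) t x).const_mul ε)
  have hheat := hz.heat_nonpos_of_isMaxOn_of_isLocalMax htT htime hspace
  have hgrad := hspace.hasDerivAt_eq_zero hz.space.self_of_nhds
  set E := Real.exp ((L + 2) * (T - t))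
  have hβx : -(β * (2 * x)) ≤ L * (1 + x ^ 2) := by
    have h2x : |2 * x| ≤ 1 + x ^ 2 := abs_le.2
      ⟨by linarith [sq_nonneg (x + 1)], by linarith [sq_nonneg (x - 1)]⟩
    calc -(β * (2 * x)) ≤ |β * (2 * x)| := neg_le_abs _
      _ = |β| * |2 * x| := abs_mul _ _
      _ ≤ L * (1 + x ^ 2) := mul_le_mul hβ h2x (abs_nonneg _) ((abs_nonneg _).trans hβ)
  have hεE : 0 < ε * E := by positivity
  have hweight : 0 ≤ ε * E * (1 - (L + 2) * (1 + x ^ 2) - β * (2 * x)) := by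
    rw [show penalty T (L + 2) t x = (1 + x ^ 2) * E from rfl] at hheat
    linear_combination hheat + hsub - β * hgrad
  linarith [nonneg_of_mul_nonneg_right hweight hεE, sq_nonneg x]

section Comparison

variable {T L W G κ : ℝ} {u ut ux uxx b : ℝ → ℝ → ℝ}

lemma HasParabolicDerivs.le_add_penalty (hu : HasParabolicDerivs T u ut ux uxx)
    (hW : ∀ t ∈ Ioo 0 T, ∀ x, u t x ≤ W) (hb : ∀ t ∈ Ioo 0 T, ∀ x, |b t x| ≤ L) (hκ : 0 ≤ κ)
    (hG : ∀ x, u T x ≤ G)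
    (hsub : ∀ t ∈ Ioo 0 T, ∀ x, G < u t x → -κ ≤ ut t x + 1 / 2 * uxx t x - b t x * ux t x)
    {ε : ℝ} (hε : 0 < ε) {t₀ : ℝ} (ht₀ : t₀ ∈ Ioo 0 T) (x₀ : ℝ) :
    u t₀ x₀ ≤ G + κ * (T - t₀) + ε * penalty T (L + 2) t₀ x₀ := by
  have hL : 0 ≤ L := (abs_nonneg _).trans (hb t₀ ht₀ 0)
  have hpen {t : ℝ} (ht : t ≤ T) (x : ℝ) : ε * (1 + x ^ 2) ≤ ε * penalty T (L + 2) t x :=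
    mul_le_mul_of_nonneg_left (one_add_sq_le_penalty x (by positivity) ht) hε.le
  have hsource {t : ℝ} (ht : t ≤ T) : 0 ≤ κ * (T - t) := mul_nonneg hκ (sub_nonneg.2 ht)
  have hstrip {t : ℝ} (ht : t ∈ Ico t₀ T) : t ∈ Ioo 0 T := ⟨ht₀.1.trans_le ht.1, ht.2⟩
  obtain ⟨ρ, hρx₀, hρfar⟩ : ∃ ρ, |x₀| ≤ ρ ∧ (W - G) / ε ≤ ρ ^ 2 :=
    ((eventually_ge_atTop |x₀|).and
      ((tendsto_pow_atTop two_ne_zero).eventually_ge_atTop ((W - G) / ε))).exists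
  have hbox := nonpos_of_forall_interior_max_false (a := t₀) (b := T)
    (K := Icc (-ρ) ρ) (U := Ioo (-ρ) ρ)
    (z := fun t x => u t x - (G + κ * (T - t)) - ε * penalty T (L + 2) t x)
    isCompact_Icc isOpen_Ioo Ioo_subset_Icc_self ?_ ?_ ?_ ?_ t₀ ⟨le_rfl, ht₀.2.le⟩ x₀
    (abs_le.1 hρx₀)
  · linarith
  · refine ((hu.continuousOn.mono (prod_mono (Icc_subset_Icc_left ht₀.1.le)
      (subset_univ _))).sub (by fun_prop)).sub ?_
    exact ((continuous_penalty T (L + 2)).const_mul ε).continuousOn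
  · intro x _
    have := (by positivity : 0 ≤ ε * (1 + x ^ 2)).trans (hpen le_rfl x)
    linarith [hG x]
  · rintro t ht x ⟨-, hx⟩
    have hρx : ρ ^ 2 ≤ x ^ 2 := sq_le_sq.2 <|
      (abs_of_nonneg ((abs_nonneg _).trans hρx₀)).trans_le (le_of_not_gt (mt abs_lt.1 hx))
    have hfar : W - G ≤ ε * x ^ 2 := (div_le_iff₀' hε).1 (hρfar.trans hρx)
    linarith [hW t (hstrip ht) x, hpen ht.2.le x, hsource ht.2.le]
  · intro t ht x _ hpos htime
    refine (hu.hasDerivAt t (hstrip ht) x).not_isLocalMax_sub_penalty hε ht.2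
      (hb t (hstrip ht) x) (hsub t (hstrip ht) x ?_) htime
    have : 0 < ε * (1 + x ^ 2) := by positivity
    linarith [hpen ht.2.le x, hsource ht.2.le]

theorem HasParabolicDerivs.le_of_subsolution (hu : HasParabolicDerivs T u ut ux uxx)
    (hW : ∀ t ∈ Ioo 0 T, ∀ x, u t x ≤ W) (hb : ∀ t ∈ Ioo 0 T, ∀ x, |b t x| ≤ L) (hκ : 0 ≤ κ)
    (hG : ∀ x, u T x ≤ G)
    (hsub : ∀ t ∈ Ioo 0 T, ∀ x, G < u t x → -κ ≤ ut t x + 1 / 2 * uxx t x - b t x * ux t x) :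
    ∀ t ∈ Ioo 0 T, ∀ x, u t x ≤ G + κ * (T - t) := by
  intro t ht x
  have hpos : 0 < penalty T (L + 2) t x := by unfold penalty; positivity
  refine le_of_forall_pos_le_add fun δ hδ => ?_
  simpa [div_mul_cancel₀ δ hpos.ne'] using
    hu.le_add_penalty hW hb hκ hG hsub (div_pos hδ hpos) ht x

end Comparison

/-! ### Interior derivative bounds by barriers -/

/-- The symmetric difference `f (x + r) - f (x - r)`. -/
def centralDiff (f : ℝ → ℝ) (x r : ℝ) : ℝ := f (x + r) - f (x - r)

/-- The iterated symmetric difference of `f` at `x` with increments `r` and `s`. -/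
def centralDiff₂ (f : ℝ → ℝ) (x r s : ℝ) : ℝ := centralDiff f (x + r) s - centralDiff f (x - r) s

lemma centralDiff₂_comm (f : ℝ → ℝ) (x r s : ℝ) : centralDiff₂ f x r s = centralDiff₂ f x s r := by
  simp only [centralDiff₂, centralDiff, add_right_comm, sub_right_comm, add_sub_right_comm]
  ring

lemma centralDiff_neg (f : ℝ → ℝ) (x r : ℝ) :
    centralDiff (fun y => -f y) x r = -centralDiff f x r := by
  simp only [centralDiff]
  ring

lemma centralDiff₂_neg (f : ℝ → ℝ) (x r s : ℝ) :
    centralDiff₂ (fun y => -f y) x r s = -centralDiff₂ f x r s := by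
  simp only [centralDiff₂, centralDiff_neg]
  ring

lemma abs_centralDiff_le_of_abs_le {f : ℝ → ℝ} {c : ℝ} (hf : ∀ x, |f x| ≤ c) (x r : ℝ) :
    |centralDiff f x r| ≤ 2 * c :=
  (abs_sub _ _).trans (by linarith [hf (x + r), hf (x - r)])

lemma abs_centralDiff_le_of_lipschitz {f : ℝ → ℝ} {c : ℝ}
    (hf : ∀ x y, |f x - f y| ≤ c * |x - y|) (x : ℝ) {r : ℝ} (hr : 0 ≤ r) :
    |centralDiff f x r| ≤ 2 * c * r :=
  (hf _ _).trans_eq (by rw [add_sub_sub_cancel, ← two_mul, abs_of_nonneg (by positivity)]; ring)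

lemma abs_centralDiff_le_of_holder {f : ℝ → ℝ} {c α : ℝ} (hα1 : α ≤ 1)
    (hf : ∀ x y, |f x - f y| ≤ c * |x - y| ^ α) (x : ℝ) {r : ℝ} (hr : 0 ≤ r) :
    |centralDiff f x r| ≤ 2 * c * r ^ α := by
  have hc : 0 ≤ c := by simpa using (abs_nonneg _).trans (hf 1 0)
  have htwo : (2 : ℝ) ^ α ≤ 2 := by
    simpa using Real.rpow_le_rpow_of_exponent_le one_le_two hα1
  calc |centralDiff f x r| ≤ c * |x + r - (x - r)| ^ α := hf _ _
    _ = c * (2 ^ α * r ^ α) := by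
      rw [add_sub_sub_cancel, ← two_mul, abs_of_nonneg (by positivity),
        Real.mul_rpow zero_le_two hr]
    _ ≤ c * (2 * r ^ α) := by gcongr
    _ = 2 * c * r ^ α := by ring

lemma hasDerivAt_centralDiff {f : ℝ → ℝ} {f' x : ℝ} (hf : HasDerivAt f f' x) :
    HasDerivAt (centralDiff f x) (2 * f') 0 :=
  ((HasDerivAt.comp_const_add x 0 (by rwa [add_zero])).sub
    (HasDerivAt.comp_const_sub x 0 (by rwa [sub_zero]))).congr_deriv (by ring)

namespace HasParabolicDerivs

variable {T : ℝ} {u ut ux uxx : ℝ → ℝ → ℝ}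

lemma hasParabolicDerivAt_centralDiff (hu : HasParabolicDerivs T u ut ux uxx) {t : ℝ}
    (ht : t ∈ Ioo 0 T) (x r : ℝ) :
    HasParabolicDerivAt (fun τ r => centralDiff (u τ) x r) (centralDiff (ut t) x r)
      (fun r => ux t (x + r) - -ux t (x - r)) (centralDiff (uxx t) x r) t r :=
  ((hu.hasDerivAt t ht (x + r)).comp_const_add x).sub
    ((hu.hasDerivAt t ht (x - r)).comp_const_sub x)

lemma continuousOn_centralDiff {X : Type*} [TopologicalSpace X] {s : Set X} {τ y r : X → ℝ}
    (hu : HasParabolicDerivs T u ut ux uxx) (hτ : ContinuousOn τ s) (hy : ContinuousOn y s)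
    (hr : ContinuousOn r s) (hmem : MapsTo τ s (Icc 0 T)) :
    ContinuousOn (fun p => centralDiff (u (τ p)) (y p) (r p)) s :=
  (hu.continuousOn_comp hτ (hy.add hr) hmem).sub (hu.continuousOn_comp hτ (hy.sub hr) hmem)

end HasParabolicDerivs

/-- The concave barrier for symmetric differences on `[0, r₀]`. -/
def gradientBarrier (A B r₀ r : ℝ) : ℝ := A * r + B * (r * (r₀ - r))

lemma hasParabolicDerivAt_gradientBarrier (A B r₀ t r : ℝ) :
    HasParabolicDerivAt (fun _ r => gradientBarrier A B r₀ r) 0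
      (fun r => A + B * (r₀ - 2 * r)) (-2 * B) t r where
  time := hasDerivAt_const t _
  space := Eventually.of_forall fun s => by
    have hquad : HasDerivAt (fun s => s * (r₀ - s)) (1 * (r₀ - s) + s * -1) s :=
      (hasDerivAt_id s).mul ((hasDerivAt_id s).const_sub r₀)
    exact (((hasDerivAt_id s).const_mul A).add (hquad.const_mul B)).congr_deriv (by ring)
  space₂ := (((((hasDerivAt_id r).const_mul 2).const_sub r₀).const_mul B).const_add A).congr_deriv
    (by ring)

section Gradient

variable {T U F G B r₀ : ℝ} {u ut ux uxx : ℝ → ℝ → ℝ}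

lemma HasParabolicDerivs.centralDiff_le_gradientBarrier (hu : HasParabolicDerivs T u ut ux uxx)
    (hU : ∀ t ∈ Ioo 0 T, ∀ x, |u t x| ≤ U)
    (hF : ∀ t ∈ Ioo 0 T, ∀ x, |ut t x + 1 / 2 * uxx t x| ≤ F)
    (hG : ∀ x y, |u T x - u T y| ≤ G * |x - y|) (hB : 2 * F < B) (hr₀ : 0 < r₀)
    {t₀ : ℝ} (ht₀ : t₀ ∈ Ioo 0 T) (x : ℝ) {r : ℝ} (hr : r ∈ Icc 0 r₀) :
    centralDiff (u t₀) x r ≤ gradientBarrier (2 * G + 2 * U / r₀) B r₀ r := by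
  have hG0 : 0 ≤ G := by simpa using (abs_nonneg _).trans (hG 1 0)
  have hU0 : 0 ≤ U := (abs_nonneg _).trans (hU t₀ ht₀ 0)
  have hF0 : 0 ≤ F := (abs_nonneg _).trans (hF t₀ ht₀ 0)
  have hB0 : 0 ≤ B := by linarith
  have hquad {s : ℝ} (hs : s ∈ Icc 0 r₀) : 0 ≤ B * (s * (r₀ - s)) :=
    mul_nonneg hB0 (mul_nonneg hs.1 (sub_nonneg.2 hs.2))
  have hstrip {t : ℝ} (ht : t ∈ Ico t₀ T) : t ∈ Ioo 0 T := ⟨ht₀.1.trans_le ht.1, ht.2⟩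
  refine sub_nonpos.1 <| nonpos_of_forall_interior_max_false
    (z := fun t r => centralDiff (u t) x r - gradientBarrier (2 * G + 2 * U / r₀) B r₀ r)
    isCompact_Icc isOpen_Ioo Ioo_subset_Icc_self ?_ ?_ ?_ ?_ t₀ ⟨le_rfl, ht₀.2.le⟩ r hr
  · refine (hu.continuousOn_centralDiff (by fun_prop) (by fun_prop) (by fun_prop)
      fun p hp => ⟨ht₀.1.le.trans hp.1.1, hp.1.2⟩).sub ?_
    unfold gradientBarrier
    fun_prop
  · intro s hs
    have := (le_abs_self _).trans (abs_centralDiff_le_of_lipschitz hG x hs.1)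
    have : 0 ≤ 2 * U / r₀ * s := mul_nonneg (by positivity) hs.1
    unfold gradientBarrier
    linarith [hquad hs]
  · rintro t ht s ⟨hs, hs'⟩
    obtain rfl | rfl : s = 0 ∨ s = r₀ := by
      by_contra! h
      exact hs' ⟨hs.1.lt_of_ne' h.1, hs.2.lt_of_ne h.2⟩
    · simp [centralDiff, gradientBarrier]
    · have := (le_abs_self _).trans (abs_centralDiff_le_of_abs_le (hU t (hstrip ht)) x s)
      have : (2 * G + 2 * U / s) * s = 2 * G * s + 2 * U := by field_simp
      have : 0 ≤ G * s := by positivity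
      unfold gradientBarrier
      linarith [hquad hs]
  · intro t ht s _ _ htime hspace
    have hz := (hu.hasParabolicDerivAt_centralDiff (hstrip ht) x s).sub
      (hasParabolicDerivAt_gradientBarrier (2 * G + 2 * U / r₀) B r₀ t s)
    have hheat := hz.heat_nonpos_of_isMaxOn_of_isLocalMax ht.2 htime hspace
    have hsource := abs_le.1 (abs_centralDiff_le_of_abs_le (hF t (hstrip ht)) x s)
    simp only [centralDiff] at hheat hsource
    linarith [hsource.1]

lemma HasParabolicDerivs.space_deriv_le (hu : HasParabolicDerivs T u ut ux uxx)
    (hU : ∀ t ∈ Ioo 0 T, ∀ x, |u t x| ≤ U)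
    (hF : ∀ t ∈ Ioo 0 T, ∀ x, |ut t x + 1 / 2 * uxx t x| ≤ F)
    (hG : ∀ x y, |u T x - u T y| ≤ G * |x - y|) (hB : 2 * F < B) (hr₀ : 0 < r₀) :
    ∀ t ∈ Ioo 0 T, ∀ x, ux t x ≤ G + U / r₀ + B * r₀ / 2 := by
  intro t ht x
  have hB0 : 0 ≤ B := by linarith [(abs_nonneg _).trans (hF t ht 0)]
  have hslope := hasDerivAt_le_of_le_mul (c := 2 * G + 2 * U / r₀ + B * r₀) hr₀
    (hasDerivAt_centralDiff (hu.hasDerivAt t ht x).space.self_of_nhds) (by simp [centralDiff])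
    fun s hs => (hu.centralDiff_le_gradientBarrier hU hF hG hB hr₀ ht x hs).trans (by
      unfold gradientBarrier
      linarith [mul_nonneg hB0 (sq_nonneg s)])
  rw [mul_div_assoc] at hslope
  linarith

theorem HasParabolicDerivs.abs_space_deriv_le (hu : HasParabolicDerivs T u ut ux uxx)
    (hU : ∀ t ∈ Ioo 0 T, ∀ x, |u t x| ≤ U)
    (hF : ∀ t ∈ Ioo 0 T, ∀ x, |ut t x + 1 / 2 * uxx t x| ≤ F)
    (hG : ∀ x y, |u T x - u T y| ≤ G * |x - y|) (hB : 2 * F < B) (hr₀ : 0 < r₀) :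
    ∀ t ∈ Ioo 0 T, ∀ x, |ux t x| ≤ G + U / r₀ + B * r₀ / 2 := by
  intro t ht x
  have hlower := (hu.const_mul (-1)).space_deriv_le (by simpa using hU)
    (fun t ht x => by rw [← abs_neg]; convert hF t ht x using 2; ring)
    (fun x y => by rw [← abs_neg]; convert hG x y using 2; ring) hB hr₀ t ht x
  exact abs_le.2 ⟨by linarith, hu.space_deriv_le hU hF hG hB hr₀ t ht x⟩

end Gradient

/-- The barrier for iterated symmetric differences on `[0, r₀]²`. -/
def hessianBarrier (α A B r₀ r s : ℝ) : ℝ := r * s * (A + B * (2 * r₀ ^ α - r ^ α - s ^ α))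

lemma hessianBarrier_comm (α A B r₀ r s : ℝ) :
    hessianBarrier α A B r₀ r s = hessianBarrier α A B r₀ s r := by
  unfold hessianBarrier
  ring

lemma mul_le_hessianBarrier {α A B r₀ r s : ℝ} (hα : 0 ≤ α) (hB : 0 ≤ B) (hr : r ∈ Icc 0 r₀)
    (hs : s ∈ Icc 0 r₀) : A * r * s ≤ hessianBarrier α A B r₀ r s := by
  have hrα : r ^ α ≤ r₀ ^ α := Real.rpow_le_rpow hr.1 hr.2 hα
  have hsα : s ^ α ≤ r₀ ^ α := Real.rpow_le_rpow hs.1 hs.2 hα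
  have : 0 ≤ r * s * (B * (2 * r₀ ^ α - r ^ α - s ^ α)) :=
    mul_nonneg (mul_nonneg hr.1 hs.1) (mul_nonneg hB (by linarith))
  unfold hessianBarrier
  linarith

lemma hessianBarrier_le_mul {α A B r₀ r s : ℝ} (hB : 0 ≤ B) (hr : 0 ≤ r) (hs : 0 ≤ s) :
    hessianBarrier α A B r₀ r s ≤ r * (A + 2 * B * r₀ ^ α) * s := by
  have : 0 ≤ r * s * (B * (r ^ α + s ^ α)) := by positivity
  unfold hessianBarrier
  linarith

lemma continuous_hessianBarrier {α : ℝ} (hα : 0 ≤ α) (A B r₀ : ℝ) :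
    Continuous fun p : ℝ × ℝ => hessianBarrier α A B r₀ p.1 p.2 := by
  have := Real.continuous_rpow_const hα
  unfold hessianBarrier
  fun_prop

lemma hasParabolicDerivAt_hessianBarrier (α A B r₀ r t : ℝ) {s : ℝ} (hs : 0 < s) :
    HasParabolicDerivAt (fun _ s => hessianBarrier α A B r₀ r s) 0
      (fun s => r * (A + B * (2 * r₀ ^ α - r ^ α - (1 + α) * s ^ α)))
      (-(r * B * (1 + α) * α * s ^ (α - 1))) t s where
  time := hasDerivAt_const t _
  space := by
    filter_upwards [Ioi_mem_nhds hs] with y (hy : 0 < y)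
    have hfactor : HasDerivAt (fun s => A + B * (2 * r₀ ^ α - r ^ α - s ^ α))
        (B * -(α * y ^ (α - 1))) y :=
      (((Real.hasDerivAt_rpow_const (Or.inl hy.ne')).const_sub _).const_mul B).const_add A
    refine (((hasDerivAt_id y).const_mul r).mul hfactor).congr_deriv ?_
    rw [id, Real.rpow_sub_one hy.ne']
    field_simp
    ring
  space₂ := (((((Real.hasDerivAt_rpow_const (Or.inl hs.ne')).const_mul (1 + α)).const_sub
    _).const_mul B).const_add A |>.const_mul r).congr_deriv (by ring)

lemma four_mul_rpow_lt_hessianBarrier_curvature {α B H r s : ℝ} (hα : 0 ≤ α) (hB : 0 ≤ B)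
    (hH : 8 * H < α * B) (hs : 0 < s) (hsr : s ≤ r) :
    4 * H * s ^ α < 1 / 2 * (r * B * (1 + α) * α * s ^ (α - 1)) := by
  have hsα : 0 < s ^ α := Real.rpow_pos_of_pos hs α
  calc 4 * H * s ^ α < 1 / 2 * (α * B * s ^ α) := by
        linarith [mul_lt_mul_of_pos_right hH hsα]
    _ ≤ 1 / 2 * (α * B * s ^ α * ((1 + α) * (r / s))) := by
        refine mul_le_mul_of_nonneg_left (le_mul_of_one_le_right (by positivity) ?_) (by norm_num)
        exact one_le_mul_of_one_le_of_one_le (by linarith) ((one_le_div hs).2 hsr)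
    _ = 1 / 2 * (r * B * (1 + α) * α * s ^ (α - 1)) := by
        rw [Real.rpow_sub_one hs.ne']
        ring

section Hessian

variable {T P H G α A B r₀ : ℝ} {u ut ux uxx : ℝ → ℝ → ℝ}

lemma HasParabolicDerivs.not_isLocalMax_centralDiff₂_sub_hessianBarrier
    (hu : HasParabolicDerivs T u ut ux uxx) (hα0 : 0 ≤ α) (hα1 : α ≤ 1) (hB : 0 ≤ B)
    (hH : ∀ t ∈ Ioo 0 T, ∀ x y,
      |ut t x + 1 / 2 * uxx t x - (ut t y + 1 / 2 * uxx t y)| ≤ H * |x - y| ^ α)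
    (hHB : 8 * H < α * B) {t : ℝ} (ht : t ∈ Ioo 0 T) (x : ℝ) {r s : ℝ} (hs : 0 < s) (hsr : s ≤ r)
    (htime : IsMaxOn (fun τ => centralDiff₂ (u τ) x r s - hessianBarrier α A B r₀ r s)
      (Icc t T) t) :
    ¬ IsLocalMax (fun s => centralDiff₂ (u t) x r s - hessianBarrier α A B r₀ r s) s := by
  intro hspace
  have hz := ((hu.hasParabolicDerivAt_centralDiff ht (x + r) s).sub
    (hu.hasParabolicDerivAt_centralDiff ht (x - r) s)).sub
    (hasParabolicDerivAt_hessianBarrier α A B r₀ r t hs)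
  have hheat := hz.heat_nonpos_of_isMaxOn_of_isLocalMax ht.2 htime hspace
  have hsource (y : ℝ) := abs_le.1 (abs_centralDiff_le_of_holder hα1 (hH t ht) y hs.le)
  have hplus := (hsource (x + r)).1
  have hminus := (hsource (x - r)).2
  simp only [centralDiff] at hheat hplus hminus
  linarith [four_mul_rpow_lt_hessianBarrier_curvature hα0 hB hHB hs hsr]

lemma HasParabolicDerivs.abs_centralDiff₂_le (hu : HasParabolicDerivs T u ut ux uxx)
    (hP : ∀ t ∈ Ioo 0 T, ∀ x, |ux t x| ≤ P) {t : ℝ} (ht : t ∈ Ioo 0 T) (x r : ℝ) {s : ℝ}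
    (hs : 0 ≤ s) : |centralDiff₂ (u t) x r s| ≤ 4 * P * s := by
  have hlip (y z : ℝ) : |u t y - u t z| ≤ P * |y - z| :=
    abs_sub_le_of_hasDerivAt_of_abs_le convex_univ
      (fun y _ => (hu.hasDerivAt t ht y).space.self_of_nhds) (fun y _ => hP t ht y) y trivial z
      trivial
  have hfst (y : ℝ) := abs_centralDiff_le_of_lipschitz hlip y hs
  exact (abs_sub _ _).trans (by linarith [hfst (x + r), hfst (x - r)])

lemma HasParabolicDerivs.centralDiff₂_le_hessianBarrier_of_notMem_interior
    (hu : HasParabolicDerivs T u ut ux uxx) (hP : ∀ t ∈ Ioo 0 T, ∀ x, |ux t x| ≤ P)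
    (hα0 : 0 ≤ α) (hB : 0 ≤ B) (hA : 4 * P / r₀ ≤ A) (hr₀ : 0 < r₀) {t : ℝ} (ht : t ∈ Ioo 0 T)
    (x : ℝ) {p : ℝ × ℝ} (hp : p ∈ Icc 0 r₀ ×ˢ Icc 0 r₀) (hp' : p ∉ Ioo 0 r₀ ×ˢ Ioo 0 r₀) :
    centralDiff₂ (u t) x p.1 p.2 ≤ hessianBarrier α A B r₀ p.1 p.2 := by
  obtain ⟨r, s⟩ := p
  have hA' : 4 * P ≤ A * r₀ := (div_le_iff₀ hr₀).1 hA
  have hedge {r s : ℝ} (hr : r = 0 ∨ r = r₀) (hs : s ∈ Icc 0 r₀) :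
      centralDiff₂ (u t) x r s ≤ hessianBarrier α A B r₀ r s := by
    obtain rfl | rfl := hr
    · simp [centralDiff₂, hessianBarrier]
    · calc centralDiff₂ (u t) x r s ≤ 4 * P * s :=
          (le_abs_self _).trans (hu.abs_centralDiff₂_le hP ht x r hs.1)
        _ ≤ A * r * s := mul_le_mul_of_nonneg_right hA' hs.1
        _ ≤ hessianBarrier α A B r r s := mul_le_hessianBarrier hα0 hB ⟨hr₀.le, le_rfl⟩ hs
  have hends {y : ℝ} (hy : y ∈ Icc 0 r₀) (hy' : y ∉ Ioo 0 r₀) : y = 0 ∨ y = r₀ := by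
    by_contra! h
    exact hy' ⟨hy.1.lt_of_ne' h.1, hy.2.lt_of_ne h.2⟩
  obtain hr | hs := not_and_or.1 hp'
  · exact hedge (hends hp.1 hr) hp.2
  · dsimp only
    rw [centralDiff₂_comm, hessianBarrier_comm]
    exact hedge (hends hp.2 hs) hp.1

lemma HasParabolicDerivs.centralDiff₂_le_hessianBarrier (hu : HasParabolicDerivs T u ut ux uxx)
    (hα0 : 0 ≤ α) (hα1 : α ≤ 1) (hP : ∀ t ∈ Ioo 0 T, ∀ x, |ux t x| ≤ P)
    (hH : ∀ t ∈ Ioo 0 T, ∀ x y,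
      |ut t x + 1 / 2 * uxx t x - (ut t y + 1 / 2 * uxx t y)| ≤ H * |x - y| ^ α)
    (hG : ∀ x r s, 0 ≤ r → 0 ≤ s → |centralDiff₂ (u T) x r s| ≤ 4 * G * r * s) (hB : 0 ≤ B)
    (hHB : 8 * H < α * B) (hGA : 4 * G ≤ A) (hPA : 4 * P / r₀ ≤ A) (hr₀ : 0 < r₀)
    {t₀ : ℝ} (ht₀ : t₀ ∈ Ioo 0 T) (x : ℝ) {r s : ℝ} (hr : r ∈ Icc 0 r₀) (hs : s ∈ Icc 0 r₀) :
    centralDiff₂ (u t₀) x r s ≤ hessianBarrier α A B r₀ r s := by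
  have hstrip {t : ℝ} (ht : t ∈ Ico t₀ T) : t ∈ Ioo 0 T := ⟨ht₀.1.trans_le ht.1, ht.2⟩
  refine sub_nonpos.1 <| nonpos_of_forall_interior_max_false
    (z := fun t p => centralDiff₂ (u t) x p.1 p.2 - hessianBarrier α A B r₀ p.1 p.2)
    (isCompact_Icc.prod isCompact_Icc) (isOpen_Ioo.prod isOpen_Ioo)
    (prod_mono Ioo_subset_Icc_self Ioo_subset_Icc_self) ?_ ?_ ?_ ?_ t₀ ⟨le_rfl, ht₀.2.le⟩ (r, s)
    ⟨hr, hs⟩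
  · have hmem : MapsTo (fun p : ℝ × ℝ × ℝ => p.1) (Icc t₀ T ×ˢ (Icc 0 r₀ ×ˢ Icc 0 r₀))
        (Icc 0 T) := fun p hp => ⟨ht₀.1.le.trans hp.1.1, hp.1.2⟩
    refine ((hu.continuousOn_centralDiff (by fun_prop) (by fun_prop) (by fun_prop) hmem).sub
      (hu.continuousOn_centralDiff (by fun_prop) (by fun_prop) (by fun_prop) hmem)).sub ?_
    exact ((continuous_hessianBarrier hα0 A B r₀).comp continuous_snd).continuousOn
  · rintro ⟨r, s⟩ ⟨hr, hs⟩
    refine sub_nonpos.2 <| (le_abs_self _).trans <| (hG x r s hr.1 hs.1).trans ?_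
    refine le_trans ?_ (mul_le_hessianBarrier hα0 hB hr hs)
    exact mul_le_mul_of_nonneg_right (mul_le_mul_of_nonneg_right hGA hr.1) hs.1
  · exact fun t ht p hp => sub_nonpos.2 <| hu.centralDiff₂_le_hessianBarrier_of_notMem_interior
      hP hα0 hB hPA hr₀ (hstrip ht) x hp.1 hp.2
  · rintro t ht ⟨r, s⟩ ⟨hr, hs⟩ - htime hspace
    obtain hsr | hrs := le_total s r
    · exact hu.not_isLocalMax_centralDiff₂_sub_hessianBarrier hα0 hα1 hB hH hHB (hstrip ht) x
        hs.1 hsr htime (hspace.comp_continuous (g := fun q => (r, q)) (by fun_prop))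
    · have hswap : (fun q => centralDiff₂ (u t) x s q - hessianBarrier α A B r₀ s q) =
          fun q => centralDiff₂ (u t) x q s - hessianBarrier α A B r₀ q s := by
        ext q
        rw [centralDiff₂_comm, hessianBarrier_comm]
      refine hu.not_isLocalMax_centralDiff₂_sub_hessianBarrier (A := A) (r₀ := r₀) hα0 hα1 hB hH
        hHB (hstrip ht) x hr.1 hrs ?_ ?_
      · simpa only [centralDiff₂_comm _ x s r, hessianBarrier_comm _ _ _ _ s r] using htime
      · rw [hswap]
        exact hspace.comp_continuous (g := fun q => (q, s)) (by fun_prop)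

theorem HasParabolicDerivs.space_deriv₂_le (hu : HasParabolicDerivs T u ut ux uxx)
    (hα0 : 0 ≤ α) (hα1 : α ≤ 1) (hP : ∀ t ∈ Ioo 0 T, ∀ x, |ux t x| ≤ P)
    (hH : ∀ t ∈ Ioo 0 T, ∀ x y,
      |ut t x + 1 / 2 * uxx t x - (ut t y + 1 / 2 * uxx t y)| ≤ H * |x - y| ^ α)
    (hG : ∀ x r s, 0 ≤ r → 0 ≤ s → |centralDiff₂ (u T) x r s| ≤ 4 * G * r * s)
    (hG0 : 0 ≤ G) (hB : 0 ≤ B) (hHB : 8 * H < α * B) (hr₀ : 0 < r₀) :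
    ∀ t ∈ Ioo 0 T, ∀ x, uxx t x ≤ G + P / r₀ + B * r₀ ^ α / 2 := by
  intro t ht x
  set A := 4 * G + 4 * P / r₀ with hA
  have hP0 : 0 ≤ P := (abs_nonneg _).trans (hP t ht x)
  have hGA : 4 * G ≤ A := le_add_of_nonneg_right (by positivity)
  have hPA : 4 * P / r₀ ≤ A := le_add_of_nonneg_left (by positivity)
  have hfst : ∀ r ∈ Icc 0 r₀, 2 * centralDiff (ux t) x r ≤ (A + 2 * B * r₀ ^ α) * r := by
    intro r hr
    have hderiv : HasDerivAt (centralDiff₂ (u t) x r) (2 * centralDiff (ux t) x r) 0 :=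
      ((hasDerivAt_centralDiff (hu.hasDerivAt t ht (x + r)).space.self_of_nhds).sub
        (hasDerivAt_centralDiff (hu.hasDerivAt t ht (x - r)).space.self_of_nhds)).congr_deriv
        (mul_sub _ _ _).symm
    have := hasDerivAt_le_of_le_mul hr₀ hderiv (by simp [centralDiff₂, centralDiff]) fun s hs =>
      (hu.centralDiff₂_le_hessianBarrier hα0 hα1 hP hH hG hB hHB hGA hPA hr₀ ht x hr hs).trans
        (hessianBarrier_le_mul hB hr.1 hs.1)
    linarith
  have hslope := hasDerivAt_le_of_le_mul hr₀
    ((hasDerivAt_centralDiff (hu.hasDerivAt t ht x).space₂).const_mul 2)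
    (by simp [centralDiff]) hfst
  rw [hA, mul_div_assoc] at hslope
  linarith

theorem HasParabolicDerivs.abs_space_deriv₂_le (hu : HasParabolicDerivs T u ut ux uxx)
    (hα0 : 0 ≤ α) (hα1 : α ≤ 1) (hP : ∀ t ∈ Ioo 0 T, ∀ x, |ux t x| ≤ P)
    (hH : ∀ t ∈ Ioo 0 T, ∀ x y,
      |ut t x + 1 / 2 * uxx t x - (ut t y + 1 / 2 * uxx t y)| ≤ H * |x - y| ^ α)
    (hG : ∀ x r s, 0 ≤ r → 0 ≤ s → |centralDiff₂ (u T) x r s| ≤ 4 * G * r * s)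
    (hB : 0 ≤ B) (hHB : 8 * H < α * B) (hr₀ : 0 < r₀) :
    ∀ t ∈ Ioo 0 T, ∀ x, |uxx t x| ≤ G + P / r₀ + B * r₀ ^ α / 2 := by
  intro t ht x
  have hG0 : 0 ≤ G := by
    linarith [(abs_nonneg _).trans (hG 0 1 1 zero_le_one zero_le_one)]
  have hlower := (hu.const_mul (-1)).space_deriv₂_le hα0 hα1 (by simpa using hP)
    (fun t ht x y => by rw [← abs_neg]; convert hH t ht x y using 2; ring)
    (fun x r s hr hs => by simpa [centralDiff₂_neg] using hG x r s hr hs) hG0 hB hHB hr₀ t ht x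
  exact abs_le.2 ⟨by linarith, hu.space_deriv₂_le hα0 hα1 hP hH hG hG0 hB hHB hr₀ t ht x⟩

end Hessian

section Absorption

variable {T A D P Y α : ℝ} {u ut ux uxx : ℝ → ℝ → ℝ}

theorem HasParabolicDerivs.abs_space_deriv_le_of_absorbable (hu : HasParabolicDerivs T u ut ux uxx)
    (hbdd : ∃ M, ∀ t ∈ Ioo 0 T, ∀ x, |ux t x| ≤ M) (hA0 : 0 < A) (hY : 0 < Y)
    (hA : ∀ t ∈ Ioo 0 T, ∀ x, |u t x| ≤ A) (hT : ∀ x y, |u T x - u T y| ≤ A * Y * |x - y|)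
    (hF : ∀ t ∈ Ioo 0 T, ∀ x, |ut t x + 1 / 2 * uxx t x| ≤ Y / 4 * |ux t x| + A * Y ^ 2) :
    ∀ t ∈ Ioo 0 T, ∀ x, |ux t x| ≤ 8 * A * Y := by
  intro t ht x
  suffices |ux t x| ≤ 2 * (4 * A * Y) by linarith
  refine abs_le_two_mul_of_absorption (ι := Ioo 0 T × ℝ) (w := fun p => ux p.1 p.2)
    (hbdd.imp fun M hM p => hM p.1 p.1.2 p.2) (fun P hP0 hP p => ?_) (⟨t, ht⟩, x)
  set F := Y / 4 * P + A * Y ^ 2 with hFdef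
  have hF0 : 0 < F := by positivity
  have hsource : ∀ t ∈ Ioo 0 T, ∀ x, |ut t x + 1 / 2 * uxx t x| ≤ F := fun t ht x =>
    (hF t ht x).trans (by rw [hFdef]; gcongr; exact hP (⟨t, ht⟩, x))
  calc |ux p.1 p.2| ≤ A * Y + A / (1 / Y) + 4 * F * (1 / Y) / 2 :=
        hu.abs_space_deriv_le hA hsource hT (by linarith) (by positivity) p.1 p.1.2 p.2
    _ = 4 * A * Y + P / 2 := by rw [hFdef]; field_simp; ring

lemma HasParabolicDerivs.abs_space_deriv_sub_le_rpow (hu : HasParabolicDerivs T u ut ux uxx)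
    (hα0 : 0 < α) (hα1 : α ≤ 1) (hD0 : 0 ≤ D) (hY : 0 < Y) (hP0 : 0 ≤ P)
    (hD : ∀ t ∈ Ioo 0 T, ∀ x, |ux t x| ≤ D * Y) (hP : ∀ t ∈ Ioo 0 T, ∀ x, |uxx t x| ≤ P)
    {t : ℝ} (ht : t ∈ Ioo 0 T) (x y : ℝ) :
    |ux t x - ux t y| ≤ (2 * (D * Y) + P / Y) * (Y * |x - y|) ^ α := by
  refine le_mul_rpow_of_le_of_le_mul (by positivity) (by positivity) hα0 hα1 ?_ ?_
  · have : 0 ≤ P / Y := by positivity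
    linarith [abs_sub (ux t x) (ux t y), hD t ht x, hD t ht y]
  · calc |ux t x - ux t y| ≤ P * |x - y| :=
          abs_sub_le_of_hasDerivAt_of_abs_le convex_univ
            (fun z _ => (hu.hasDerivAt t ht z).space₂) (fun z _ => hP t ht z) x trivial y trivial
      _ = P / Y * (Y * |x - y|) := by field_simp
      _ ≤ (2 * (D * Y) + P / Y) * (Y * |x - y|) := by
          gcongr
          exact le_add_of_nonneg_left (by positivity)

theorem HasParabolicDerivs.abs_space_deriv₂_le_of_absorbable
    (hu : HasParabolicDerivs T u ut ux uxx) (hbdd : ∃ M, ∀ t ∈ Ioo 0 T, ∀ x, |uxx t x| ≤ M)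
    (hα0 : 0 < α) (hα1 : α ≤ 1) (hD0 : 0 < D) (hY : 0 < Y)
    (hD : ∀ t ∈ Ioo 0 T, ∀ x, |ux t x| ≤ D * Y)
    (hT : ∀ x r s, 0 ≤ r → 0 ≤ s → |centralDiff₂ (u T) x r s| ≤ 4 * (D * Y ^ 2) * r * s)
    (hF : ∀ t ∈ Ioo 0 T, ∀ x y, |ut t x + 1 / 2 * uxx t x - (ut t y + 1 / 2 * uxx t y)| ≤
      α * Y / 16 * |ux t x - ux t y| + D * Y ^ 2 * (Y * |x - y|) ^ α) :
    ∀ t ∈ Ioo 0 T, ∀ x, |uxx t x| ≤ 22 / α * D * Y ^ 2 := by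
  intro t ht x
  suffices |uxx t x| ≤ 2 * (11 / α * D * Y ^ 2) from this.trans_eq (by ring)
  refine abs_le_two_mul_of_absorption (ι := Ioo 0 T × ℝ) (w := fun p => uxx p.1 p.2)
    (hbdd.imp fun M hM p => hM p.1 p.1.2 p.2) (fun P hP0 hP p => ?_) (⟨t, ht⟩, x)
  set H := α * Y / 16 * (2 * (D * Y) + P / Y) + D * Y ^ 2 with hHdef
  have hH0 : 0 < H := by positivity
  have hsource : ∀ t ∈ Ioo 0 T, ∀ x y,
      |ut t x + 1 / 2 * uxx t x - (ut t y + 1 / 2 * uxx t y)| ≤ H * Y ^ α * |x - y| ^ α := by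
    intro t ht x y
    refine (hF t ht x y).trans ((add_le_add_left (mul_le_mul_of_nonneg_left
      (hu.abs_space_deriv_sub_le_rpow hα0 hα1 hD0.le hY hP0 hD (fun t ht x => hP (⟨t, ht⟩, x))
        ht x y)
      (by positivity)) _).trans_eq ?_)
    rw [Real.mul_rpow hY.le (abs_nonneg _), hHdef]
    ring
  have hYα : Y ^ α * (1 / Y) ^ α = 1 := by
    rw [← Real.mul_rpow hY.le (by positivity), mul_one_div_cancel hY.ne', Real.one_rpow]
  calc |uxx p.1 p.2|
      ≤ D * Y ^ 2 + D * Y / (1 / Y) + 16 * (H * Y ^ α) / α * (1 / Y) ^ α / 2 :=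
        hu.abs_space_deriv₂_le hα0.le hα1 hD hsource hT (by positivity)
          (by field_simp; norm_num) (by positivity) p.1 p.1.2 p.2
    _ = D * Y ^ 2 + D * Y / (1 / Y) + 16 * H * (Y ^ α * (1 / Y) ^ α) / α / 2 := by ring
    _ = P / 2 + (8 + 3 * α) / α * D * Y ^ 2 := by
        rw [hYα, hHdef]
        field_simp
        ring
    _ ≤ 11 / α * D * Y ^ 2 + P / 2 := by
        rw [add_comm]
        gcongr
        linarith

end Absorption

/-! ### One slice of the system -/

/-- A bounded solution, with bounded space derivatives, of the linear equation
`v_t + ½ v_xx = lam v_x - ½ lam² + E` on `(0,T) × ℝ`. Both `γu⁰` and `γu¹` are of this kind; `E` is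
the jump term coupling the slices. -/
structure IsHJBSolution (T : ℝ) (lam E v vt vx vxx : ℝ → ℝ → ℝ) : Prop
    extends HasParabolicDerivs T v vt vx vxx where
  bounded : ∃ W, ∀ t ∈ Ioo 0 T, ∀ x, |v t x| ≤ W
  bounded_space : ∃ W, ∀ t ∈ Ioo 0 T, ∀ x, |vx t x| ≤ W
  bounded_space₂ : ∃ W, ∀ t ∈ Ioo 0 T, ∀ x, |vxx t x| ≤ W
  equation : ∀ t ∈ Ioo 0 T, ∀ x,
    vt t x + 1 / 2 * vxx t x = lam t x * vx t x - lam t x ^ 2 / 2 + E t x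

/-- Bounds `m` for `v` and `A` for its terminal derivatives at length scale `Y⁻¹`, together with a
drift `lam` that is small, in size and in `α`-Hölder oscillation, at that scale. -/
structure DataAtScale (T α m A Y : ℝ) (lam v : ℝ → ℝ → ℝ) : Prop where
  abs_drift_le : ∀ t ∈ Ioo 0 T, ∀ x, |lam t x| ≤ α * Y / 16
  abs_drift_sub_le : ∀ t ∈ Ioo 0 T, ∀ x y,
    |lam t x - lam t y| ≤ α * Y / 16 * (Y * |x - y|) ^ α
  abs_le : ∀ t ∈ Ioo 0 T, ∀ x, |v t x| ≤ m
  abs_terminal_sub_le : ∀ x y, |v T x - v T y| ≤ A * Y * |x - y|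
  abs_terminal_centralDiff₂_le : ∀ x r s, 0 ≤ r → 0 ≤ s →
    |centralDiff₂ (v T) x r s| ≤ 4 * (A * Y ^ 2) * r * s

namespace IsHJBSolution

variable {T α μ κ m A Y L G : ℝ} {lam E v vt vx vxx : ℝ → ℝ → ℝ}

lemma le_add_mul (hv : IsHJBSolution T lam E v vt vx vxx)
    (hlam : ∀ t ∈ Ioo 0 T, ∀ x, |lam t x| ≤ L) (hκ : 0 ≤ κ) (hE : ∀ t ∈ Ioo 0 T, ∀ x, -κ ≤ E t x)
    (hG : ∀ x, v T x ≤ G) {t : ℝ} (ht : t ∈ Ioo 0 T) (x : ℝ) :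
    v t x ≤ G + (L ^ 2 / 2 + κ) * T := by
  obtain ⟨W, hW⟩ := hv.bounded
  refine (hv.le_of_subsolution (κ := L ^ 2 / 2 + κ) (fun t ht x => (abs_le.1 (hW t ht x)).2) hlam
    (by positivity) hG (fun t ht x _ => ?_) t ht x).trans ?_
  · have : lam t x ^ 2 ≤ L ^ 2 := sq_le_sq.2 ((hlam t ht x).trans (le_abs_self L))
    linarith [hv.equation t ht x, hE t ht x]
  · gcongr
    linarith [ht.1]

lemma neg_le (hv : IsHJBSolution T lam E v vt vx vxx)
    (hlam : ∀ t ∈ Ioo 0 T, ∀ x, |lam t x| ≤ L)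
    (hE : ∀ t ∈ Ioo 0 T, ∀ x, v t x < -G → E t x ≤ 0)
    (hG : ∀ x, -G ≤ v T x) {t : ℝ} (ht : t ∈ Ioo 0 T) (x : ℝ) : -G ≤ v t x := by
  obtain ⟨W, hW⟩ := hv.bounded
  have := (hv.const_mul (-1)).le_of_subsolution (κ := 0) (G := G)
    (fun t ht x => by linarith [(abs_le.1 (hW t ht x)).1]) hlam le_rfl
    (fun x => by linarith [hG x])
    (fun t ht x hlt => by
      linarith [hv.equation t ht x, hE t ht x (by linarith), sq_nonneg (lam t x)]) t ht x
  linarith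

lemma abs_heat_le (hv : IsHJBSolution T lam E v vt vx vxx) (hd : DataAtScale T α m A Y lam v)
    (hα1 : α ≤ 1) (hY : 0 < Y) (hμA : 1 + μ ≤ A)
    (hE : ∀ t ∈ Ioo 0 T, ∀ x, |E t x| ≤ μ * Y ^ 2) {t : ℝ} (ht : t ∈ Ioo 0 T) (x : ℝ) :
    |vt t x + 1 / 2 * vxx t x| ≤ Y / 4 * |vx t x| + A * Y ^ 2 := by
  have hlam : |lam t x| ≤ Y / 4 := by
    nlinarith [hd.abs_drift_le t ht x]
  have hlam_sq : lam t x ^ 2 ≤ Y ^ 2 := sq_le_sq.2 (by rw [abs_of_pos hY]; linarith)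
  have hprod : |lam t x * vx t x| ≤ Y / 4 * |vx t x| := by
    rw [abs_mul]
    gcongr
  have hsource : |E t x - lam t x ^ 2 / 2| ≤ A * Y ^ 2 := by
    have := abs_le.1 (hE t ht x)
    have := mul_le_mul_of_nonneg_right hμA (sq_nonneg Y)
    rw [abs_le]
    constructor <;> linarith [sq_nonneg (lam t x)]
  rw [hv.equation t ht x, sub_add_eq_add_sub, add_sub_assoc]
  exact (abs_add_le _ _).trans (add_le_add hprod hsource)

lemma abs_space_deriv_le (hv : IsHJBSolution T lam E v vt vx vxx)
    (hd : DataAtScale T α m A Y lam v) (hα1 : α ≤ 1) (hY : 0 < Y) (hA : 0 < A) (hmA : m ≤ A)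
    (hμA : 1 + μ ≤ A) (hE : ∀ t ∈ Ioo 0 T, ∀ x, |E t x| ≤ μ * Y ^ 2) :
    ∀ t ∈ Ioo 0 T, ∀ x, |vx t x| ≤ 8 * A * Y :=
  hv.abs_space_deriv_le_of_absorbable hv.bounded_space hA hY
    (fun t ht x => (hd.abs_le t ht x).trans hmA) hd.abs_terminal_sub_le
    fun _ ht => hv.abs_heat_le hd hα1 hY hμA hE ht

lemma abs_sub_le_of_abs_space_deriv_le (hv : IsHJBSolution T lam E v vt vx vxx)
    (hd : DataAtScale T α m A Y lam v) (hα0 : 0 < α) (hα1 : α ≤ 1) (hY : 0 < Y) (hA : 0 < A)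
    (hmA : m ≤ A) (hvx : ∀ t ∈ Ioo 0 T, ∀ x, |vx t x| ≤ 8 * A * Y) :
    ∀ t ∈ Ioo 0 T, ∀ x y, |v t x - v t y| ≤ 8 * A * (Y * |x - y|) ^ α := by
  intro t ht x y
  refine le_mul_rpow_of_le_of_le_mul (by positivity) (by positivity) hα0 hα1 ?_ ?_
  · linarith [abs_sub (v t x) (v t y), hd.abs_le t ht x, hd.abs_le t ht y]
  · rw [← mul_assoc]
    exact abs_sub_le_of_hasDerivAt_of_abs_le convex_univ
      (fun z _ => (hv.hasDerivAt t ht z).space.self_of_nhds) (fun z _ => hvx t ht z) x trivial y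
      trivial

end IsHJBSolution

lemma abs_hamiltonian_sub_le {a b p q N P θ : ℝ} (ha : |a| ≤ N) (hb : |b| ≤ N)
    (hab : |a - b| ≤ N * θ) (hq : |q| ≤ P) :
    |a * p - a ^ 2 / 2 - (b * q - b ^ 2 / 2)| ≤ N * |p - q| + N * (P + N) * θ := by
  have hmean : |q - (a + b) / 2| ≤ P + N := by
    rw [abs_le] at *
    constructor <;> linarith
  calc |a * p - a ^ 2 / 2 - (b * q - b ^ 2 / 2)|
      = |a * (p - q) + (a - b) * (q - (a + b) / 2)| := by congr 1; ring
    _ ≤ |a| * |p - q| + |a - b| * |q - (a + b) / 2| := by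
        rw [← abs_mul, ← abs_mul]
        exact abs_add_le _ _
    _ ≤ N * |p - q| + N * θ * (P + N) := by
        gcongr
        exact (abs_nonneg _).trans hab
    _ = N * |p - q| + N * (P + N) * θ := by ring

namespace IsHJBSolution

variable {T α μ m A Y : ℝ} {lam E v vt vx vxx : ℝ → ℝ → ℝ}

lemma abs_heat_sub_le (hv : IsHJBSolution T lam E v vt vx vxx) (hd : DataAtScale T α m A Y lam v)
    (hα0 : 0 ≤ α) (hα1 : α ≤ 1) (hY : 0 < Y) (hA : 1 ≤ A)
    (hvx : ∀ t ∈ Ioo 0 T, ∀ x, |vx t x| ≤ 8 * A * Y)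
    (hE : ∀ t ∈ Ioo 0 T, ∀ x y, |E t x - E t y| ≤ 16 * μ * A * Y ^ 2 * (Y * |x - y|) ^ α)
    {t : ℝ} (ht : t ∈ Ioo 0 T) (x y : ℝ) :
    |vt t x + 1 / 2 * vxx t x - (vt t y + 1 / 2 * vxx t y)| ≤
      α * Y / 16 * |vx t x - vx t y| + 8 * (1 + 2 * μ) * A * Y ^ 2 * (Y * |x - y|) ^ α := by
  have hham := abs_hamiltonian_sub_le (p := vx t x) (hd.abs_drift_le t ht x)
    (hd.abs_drift_le t ht y) (hd.abs_drift_sub_le t ht x y) (hvx t ht y)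
  have hcoeff : α * Y / 16 * (8 * A * Y + α * Y / 16) ≤ 8 * A * Y ^ 2 := by
    have hαY : α * Y ≤ Y := mul_le_of_le_one_left hY.le hα1
    calc α * Y / 16 * (8 * A * Y + α * Y / 16) ≤ Y / 16 * (8 * A * Y + A * Y / 16) := by
          gcongr
          exact hα1.trans hA
      _ ≤ 8 * A * Y ^ 2 := by
          have : 0 ≤ A * Y ^ 2 := by positivity
          linarith
  rw [hv.equation t ht x, hv.equation t ht y, add_sub_add_comm]
  refine (abs_add_le _ _).trans ((add_le_add hham (hE t ht x y)).trans ?_)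
  have := mul_le_mul_of_nonneg_right hcoeff (by positivity : 0 ≤ (Y * |x - y|) ^ α)
  linarith

lemma abs_space_deriv₂_le (hv : IsHJBSolution T lam E v vt vx vxx)
    (hd : DataAtScale T α m A Y lam v) (hα0 : 0 < α) (hα1 : α ≤ 1) (hY : 0 < Y) (hA : 1 ≤ A)
    (hμ : 0 ≤ μ) (hvx : ∀ t ∈ Ioo 0 T, ∀ x, |vx t x| ≤ 8 * A * Y)
    (hE : ∀ t ∈ Ioo 0 T, ∀ x y, |E t x - E t y| ≤ 16 * μ * A * Y ^ 2 * (Y * |x - y|) ^ α) :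
    ∀ t ∈ Ioo 0 T, ∀ x, |vxx t x| ≤ 22 / α * (8 * (1 + 2 * μ) * A) * Y ^ 2 := by
  have hAB : 8 * A ≤ 8 * (1 + 2 * μ) * A := by nlinarith [mul_nonneg hμ (zero_le_one.trans hA)]
  refine hv.abs_space_deriv₂_le_of_absorbable hv.bounded_space₂ hα0 hα1 (by positivity) hY
    (fun t ht x => (hvx t ht x).trans (by gcongr)) (fun x r s hr hs =>
      (hd.abs_terminal_centralDiff₂_le x r s hr hs).trans ?_)
    (fun t ht => hv.abs_heat_sub_le hd hα0.le hα1 hY hA hvx hE ht)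
  gcongr
  linarith

end IsHJBSolution

/-! ### The coupled system -/

/-- The jump term `μ (e^{v⁰ - v¹} - 1)` through which the second slice enters the first equation. -/
def jumpTerm (μ : ℝ) (v₀ v₁ : ℝ → ℝ → ℝ) (t x : ℝ) : ℝ := μ * (Real.exp (v₀ t x - v₁ t x) - 1)

lemma exp_two_mul_le_sq {m Y : ℝ} (h : Real.exp m ≤ Y) : Real.exp (2 * m) ≤ Y ^ 2 := by
  rw [← Nat.cast_ofNat, Real.exp_nat_mul]
  gcongr

section JumpTerm

variable {μ m Y t x y : ℝ} {v₀ v₁ : ℝ → ℝ → ℝ}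

lemma abs_jumpTerm_le (hμ : 0 ≤ μ) (h₀ : |v₀ t x| ≤ m) (h₁ : |v₁ t x| ≤ m)
    (hmY : Real.exp m ≤ Y) : |jumpTerm μ v₀ v₁ t x| ≤ μ * Y ^ 2 := by
  have hm : 0 ≤ m := (abs_nonneg _).trans h₀
  have hY : 1 ≤ Y := (Real.one_le_exp hm).trans hmY
  have hexp : Real.exp (v₀ t x - v₁ t x) ≤ Y ^ 2 :=
    (Real.exp_le_exp.2 (by linarith [abs_le.1 h₀, abs_le.1 h₁])).trans (exp_two_mul_le_sq hmY)
  rw [jumpTerm, abs_mul, abs_of_nonneg hμ]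
  gcongr
  rw [abs_le]
  constructor <;> linarith [Real.exp_pos (v₀ t x - v₁ t x), one_le_pow₀ (n := 2) hY]

lemma abs_jumpTerm_sub_le (hμ : 0 ≤ μ) (h₀ : ∀ x, |v₀ t x| ≤ m) (h₁ : ∀ x, |v₁ t x| ≤ m)
    (hmY : Real.exp m ≤ Y) : |jumpTerm μ v₀ v₁ t x - jumpTerm μ v₀ v₁ t y| ≤
      μ * Y ^ 2 * (|v₀ t x - v₀ t y| + |v₁ t x - v₁ t y|) := by
  have hle : ∀ z, v₀ t z - v₁ t z ≤ 2 * m := fun z => by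
    linarith [abs_le.1 (h₀ z), abs_le.1 (h₁ z)]
  calc |jumpTerm μ v₀ v₁ t x - jumpTerm μ v₀ v₁ t y|
      = μ * |Real.exp (v₀ t x - v₁ t x) - Real.exp (v₀ t y - v₁ t y)| := by
        rw [jumpTerm, jumpTerm, ← mul_sub, sub_sub_sub_cancel_right, abs_mul, abs_of_nonneg hμ]
    _ ≤ μ * (Y ^ 2 * |v₀ t x - v₀ t y - (v₁ t x - v₁ t y)|) := by
        gcongr
        refine (abs_exp_sub_exp_le (hle x) (hle y)).trans ?_
        rw [sub_sub_sub_comm]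
        gcongr
        exact exp_two_mul_le_sq hmY
    _ ≤ μ * Y ^ 2 * (|v₀ t x - v₀ t y| + |v₁ t x - v₁ t y|) := by
        rw [mul_assoc]
        gcongr
        exact abs_sub _ _

end JumpTerm

/-- Bounds for `u` and its derivatives in the natural parabolic scaling at length scale `Y⁻¹`. -/
structure ScaleBounds (T K Y : ℝ) (u ut ux uxx : ℝ → ℝ → ℝ) : Prop where
  abs_le : ∀ t ∈ Ioo 0 T, ∀ x, |u t x| ≤ K
  abs_time_deriv_le : ∀ t ∈ Ioo 0 T, ∀ x, |ut t x| ≤ K * Y ^ 2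
  abs_space_deriv_le : ∀ t ∈ Ioo 0 T, ∀ x, |ux t x| ≤ K * Y
  abs_space_deriv₂_le : ∀ t ∈ Ioo 0 T, ∀ x, |uxx t x| ≤ K * Y ^ 2

lemma ScaleBounds.of_const_mul {T K Y γ : ℝ} {u ut ux uxx : ℝ → ℝ → ℝ} (hγ : 0 < γ)
    (h : ScaleBounds T K Y (fun t x => γ * u t x) (fun t x => γ * ut t x) (fun t x => γ * ux t x)
      fun t x => γ * uxx t x) : ScaleBounds T (K / γ) Y u ut ux uxx := by
  have hdiv : ∀ {a c : ℝ}, |γ * a| ≤ c → |a| ≤ c / γ := fun h => by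
    rwa [abs_mul, abs_of_pos hγ, ← le_div_iff₀' hγ] at h
  constructor <;> intro t ht x
  · exact hdiv (h.abs_le t ht x)
  · rw [div_mul_eq_mul_div]
    exact hdiv (h.abs_time_deriv_le t ht x)
  · rw [div_mul_eq_mul_div]
    exact hdiv (h.abs_space_deriv_le t ht x)
  · rw [div_mul_eq_mul_div]
    exact hdiv (h.abs_space_deriv₂_le t ht x)

section Coupled

variable {T α μ m A Y : ℝ}

lemma IsHJBSolution.scaleBounds {lam E v vt vx vxx : ℝ → ℝ → ℝ}
    (hv : IsHJBSolution T lam E v vt vx vxx) (hd : DataAtScale T α m A Y lam v) (hα0 : 0 < α)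
    (hα1 : α ≤ 1) (hY : 0 < Y) (hμ : 0 ≤ μ) (hmA : m ≤ A) (hμA : 1 + μ ≤ A)
    (hE : ∀ t ∈ Ioo 0 T, ∀ x, |E t x| ≤ μ * Y ^ 2)
    (hE' : ∀ t ∈ Ioo 0 T, ∀ x y, |E t x - E t y| ≤ 16 * μ * A * Y ^ 2 * (Y * |x - y|) ^ α) :
    ScaleBounds T (176 / α * (1 + 2 * μ) * A) Y v vt vx vxx := by
  have hA : 1 ≤ A := by linarith
  have hvx := hv.abs_space_deriv_le hd hα1 hY (by linarith) hmA hμA hE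
  have hvxx := hv.abs_space_deriv₂_le hd hα0 hα1 hY hA hμ hvx hE'
  have hK : 176 * A ≤ 176 / α * (1 + 2 * μ) * A := by
    have : 176 ≤ 176 / α := le_div_self (by norm_num) hα0 hα1
    gcongr
    nlinarith
  have hconst : 22 / α * (8 * (1 + 2 * μ) * A) = 176 / α * (1 + 2 * μ) * A := by ring
  rw [hconst] at hvxx
  refine ⟨fun t ht x => by linarith [hd.abs_le t ht x], fun t ht x => ?_,
    fun t ht x => (hvx t ht x).trans
      (mul_le_mul_of_nonneg_right (by linarith) hY.le), hvxx⟩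
  have hheat : |vt t x + 1 / 2 * vxx t x| ≤ 3 * A * Y ^ 2 := by
    refine (hv.abs_heat_le hd hα1 hY hμA hE ht x).trans ?_
    linarith [mul_le_mul_of_nonneg_left (hvx t ht x) (by positivity : 0 ≤ Y / 4)]
  have := abs_le.1 hheat
  have := abs_le.1 (hvxx t ht x)
  have := mul_le_mul_of_nonneg_right hK (sq_nonneg Y)
  have : 0 ≤ A * Y ^ 2 := by positivity
  rw [abs_le]
  constructor <;> linarith

theorem IsHJBSolution.scaleBounds_of_coupled
    {lam₀ lam₁ v₀ v₀t v₀x v₀xx v₁ v₁t v₁x v₁xx : ℝ → ℝ → ℝ}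
    (hv₀ : IsHJBSolution T lam₀ (jumpTerm μ v₀ v₁) v₀ v₀t v₀x v₀xx)
    (hv₁ : IsHJBSolution T lam₁ (fun _ _ => 0) v₁ v₁t v₁x v₁xx)
    (hd₀ : DataAtScale T α m A Y lam₀ v₀) (hd₁ : DataAtScale T α m A Y lam₁ v₁)
    (hα0 : 0 < α) (hα1 : α ≤ 1) (hμ : 0 ≤ μ) (hmA : m ≤ A) (hμA : 1 + μ ≤ A)
    (hmY : Real.exp m ≤ Y) :
    ScaleBounds T (176 / α * (1 + 2 * μ) * A) Y v₀ v₀t v₀x v₀xx ∧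
      ScaleBounds T (176 / α * (1 + 2 * μ) * A) Y v₁ v₁t v₁x v₁xx := by
  have hY : 0 < Y := (Real.exp_pos m).trans_le hmY
  have hA : 0 < A := by linarith
  have hzero : ∀ t ∈ Ioo 0 T, ∀ x : ℝ, |(0 : ℝ)| ≤ μ * Y ^ 2 := fun _ _ _ => by
    rw [abs_zero]
    positivity
  have hjump : ∀ t ∈ Ioo 0 T, ∀ x, |jumpTerm μ v₀ v₁ t x| ≤ μ * Y ^ 2 := fun t ht x =>
    abs_jumpTerm_le hμ (hd₀.abs_le t ht x) (hd₁.abs_le t ht x) hmY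
  have hosc₀ := hv₀.abs_sub_le_of_abs_space_deriv_le hd₀ hα0 hα1 hY hA hmA
    (hv₀.abs_space_deriv_le hd₀ hα1 hY hA hmA hμA hjump)
  have hosc₁ := hv₁.abs_sub_le_of_abs_space_deriv_le hd₁ hα0 hα1 hY hA hmA
    (hv₁.abs_space_deriv_le hd₁ hα1 hY hA hmA hμA hzero)
  refine ⟨hv₀.scaleBounds hd₀ hα0 hα1 hY hμ hmA hμA hjump fun t ht x y => ?_,
    hv₁.scaleBounds hd₁ hα0 hα1 hY hμ hmA hμA hzero fun _ _ _ _ => by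
      rw [sub_zero, abs_zero]
      positivity⟩
  calc |jumpTerm μ v₀ v₁ t x - jumpTerm μ v₀ v₁ t y|
      ≤ μ * Y ^ 2 * (|v₀ t x - v₀ t y| + |v₁ t x - v₁ t y|) :=
        abs_jumpTerm_sub_le hμ (hd₀.abs_le t ht) (hd₁.abs_le t ht) hmY
    _ ≤ μ * Y ^ 2 * (8 * A * (Y * |x - y|) ^ α + 8 * A * (Y * |x - y|) ^ α) := by
        gcongr
        exacts [hosc₀ t ht x y, hosc₁ t ht x y]
    _ = 16 * μ * A * Y ^ 2 * (Y * |x - y|) ^ α := by ring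

end Coupled

section CoupledBounds

variable {T μ L G : ℝ} {lam₀ lam₁ v₀ v₀t v₀x v₀xx v₁ v₁t v₁x v₁xx : ℝ → ℝ → ℝ}

/- At a point where `v₀ < -G ≤ v₁` the jump term is negative, so the lower bound passes from the
second slice to the first. -/
lemma IsHJBSolution.neg_le_of_coupled
    (hv₀ : IsHJBSolution T lam₀ (jumpTerm μ v₀ v₁) v₀ v₀t v₀x v₀xx)
    (hlam₀ : ∀ t ∈ Ioo 0 T, ∀ x, |lam₀ t x| ≤ L) (hG₀ : ∀ x, -G ≤ v₀ T x)
    (hv₁ : ∀ t ∈ Ioo 0 T, ∀ x, -G ≤ v₁ t x) (hμ : 0 ≤ μ) {t : ℝ} (ht : t ∈ Ioo 0 T) (x : ℝ) :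
    -G ≤ v₀ t x := by
  refine hv₀.neg_le hlam₀ (fun t ht x hlt => mul_nonpos_of_nonneg_of_nonpos hμ ?_) hG₀ ht x
  have : Real.exp (v₀ t x - v₁ t x) ≤ 1 := Real.exp_le_one_iff.2 (by linarith [hv₁ t ht x])
  linarith

lemma IsHJBSolution.abs_le_of_coupled
    (hv₀ : IsHJBSolution T lam₀ (jumpTerm μ v₀ v₁) v₀ v₀t v₀x v₀xx)
    (hv₁ : IsHJBSolution T lam₁ (fun _ _ => 0) v₁ v₁t v₁x v₁xx)
    (hlam₀ : ∀ t ∈ Ioo 0 T, ∀ x, |lam₀ t x| ≤ L) (hlam₁ : ∀ t ∈ Ioo 0 T, ∀ x, |lam₁ t x| ≤ L)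
    (hG₀ : ∀ x, |v₀ T x| ≤ G) (hG₁ : ∀ x, |v₁ T x| ≤ G) (hμ : 0 ≤ μ) {t : ℝ} (ht : t ∈ Ioo 0 T)
    (x : ℝ) :
    |v₀ t x| ≤ G + 1 / 2 * T * L ^ 2 + μ * T ∧ |v₁ t x| ≤ G + 1 / 2 * T * L ^ 2 + μ * T := by
  have hT : 0 < T := ht.1.trans ht.2
  have hlower₁ : ∀ t ∈ Ioo 0 T, ∀ x, -G ≤ v₁ t x := fun _ ht =>
    hv₁.neg_le hlam₁ (fun _ _ _ _ => le_rfl) (fun x => (abs_le.1 (hG₁ x)).1) ht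
  have hlower₀ := hv₀.neg_le_of_coupled hlam₀ (fun x => (abs_le.1 (hG₀ x)).1) hlower₁ hμ ht x
  have hupper₀ := hv₀.le_add_mul hlam₀ hμ
    (fun t _ x => by unfold jumpTerm; nlinarith [Real.exp_pos (v₀ t x - v₁ t x)])
    (fun x => (abs_le.1 (hG₀ x)).2) ht x
  have hupper₁ := hv₁.le_add_mul (κ := 0) hlam₁ le_rfl (fun _ _ _ => neg_zero.le)
    (fun x => (abs_le.1 (hG₁ x)).2) ht x
  have hlower₁' := hlower₁ t ht x
  have hL : 0 ≤ T * L ^ 2 := by positivity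
  have hμT : 0 ≤ μ * T := by positivity
  constructor <;> rw [abs_le] <;> constructor <;> linarith

end CoupledBounds

/-! ### Hölder norms -/

lemma supN_nonneg (T : ℝ) (u : ℝ → ℝ → ℝ) : 0 ≤ supN T u := Real.sInf_nonneg fun _ h => h.1

lemma hSemi_nonneg (T α : ℝ) (u : ℝ → ℝ → ℝ) : 0 ≤ hSemi T α u := Real.sInf_nonneg fun _ h => h.1

lemma pd_nonneg (t₁ x₁ t₂ x₂ : ℝ) : 0 ≤ pd t₁ x₁ t₂ x₂ := by
  unfold pd
  positivity

lemma MemCa.abs_le_supN {T α t : ℝ} {u : ℝ → ℝ → ℝ} (hu : MemCa T α u) (ht : t ∈ Icc 0 T) (x : ℝ) :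
    |u t x| ≤ supN T u := by
  obtain ⟨M, hM⟩ := hu.2.1
  exact le_csInf ⟨max M 0, le_max_right _ _, fun t ht x => (hM t ht x).trans (le_max_left _ _)⟩
    fun K hK => hK.2 t ht x

lemma MemCa.abs_sub_le_hSemi_mul {T α t : ℝ} {u : ℝ → ℝ → ℝ} (hu : MemCa T α u) (ht : t ∈ Icc 0 T)
    (x y : ℝ) : |u t x - u t y| ≤ hSemi T α u * |x - y| ^ α := by
  obtain ⟨M, hM⟩ := hu.2.2
  rcases eq_or_ne x y with rfl | hxy
  · simpa using mul_nonneg (hSemi_nonneg T α u) (Real.rpow_nonneg le_rfl α)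
  have hpos : 0 < |x - y| ^ α := Real.rpow_pos_of_pos (abs_pos.2 (sub_ne_zero.2 hxy)) _
  have hpd : pd t x t y = |x - y| := by simp [pd]
  rw [← div_le_iff₀ hpos]
  refine le_csInf ⟨max M 0, le_max_right _ _, fun t₁ ht₁ t₂ ht₂ x y =>
    (hM t₁ ht₁ t₂ ht₂ x y).trans (mul_le_mul_of_nonneg_right (le_max_left _ _)
      (Real.rpow_nonneg (pd_nonneg ..) _))⟩ fun K hK => ?_
  rw [div_le_iff₀ hpos, ← hpd]
  exact hK.2 t ht t ht x y

lemma supN_le_of_forall_Ioo {T K : ℝ} {u : ℝ → ℝ → ℝ} (hT : 0 < T)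
    (hu : ContinuousOn (fun p : ℝ × ℝ => u p.1 p.2) (Icc 0 T ×ˢ univ)) (hK : 0 ≤ K)
    (h : ∀ t ∈ Ioo 0 T, ∀ x, |u t x| ≤ K) : supN T u ≤ K := by
  refine csInf_le ⟨0, fun M hM => hM.1⟩ ⟨hK, fun t ht x => ?_⟩
  rw [← closure_Ioo hT.ne] at ht hu
  exact le_on_closure (fun t ht => h t ht x)
    (hu.comp (f := fun t => (t, x)) (by fun_prop) fun t ht => ⟨ht, mem_univ _⟩).abs
    continuousOn_const ht

lemma hSemi_le_of_forall_Ioo {T α K : ℝ} {u : ℝ → ℝ → ℝ} (hT : 0 < T) (hα : 0 ≤ α)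
    (hu : ContinuousOn (fun p : ℝ × ℝ => u p.1 p.2) (Icc 0 T ×ˢ univ)) (hK : 0 ≤ K)
    (h : ∀ t₁ ∈ Ioo 0 T, ∀ t₂ ∈ Ioo 0 T, ∀ x₁ x₂,
      |u t₁ x₁ - u t₂ x₂| ≤ K * pd t₁ x₁ t₂ x₂ ^ α) : hSemi T α u ≤ K := by
  refine csInf_le ⟨0, fun M hM => hM.1⟩ ⟨hK, fun t₁ ht₁ t₂ ht₂ x₁ x₂ => ?_⟩
  have hclosure : closure (Ioo 0 T ×ˢ Ioo 0 T) = Icc 0 T ×ˢ Icc 0 T := by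
    rw [closure_prod_eq, closure_Ioo hT.ne]
  refine le_on_closure (s := Ioo 0 T ×ˢ Ioo 0 T) (x := (t₁, t₂))
    (f := fun p : ℝ × ℝ => |u p.1 x₁ - u p.2 x₂|) (g := fun p => K * pd p.1 x₁ p.2 x₂ ^ α)
    (fun p hp => h p.1 hp.1 p.2 hp.2 x₁ x₂) ?_ ?_ (hclosure ▸ ⟨ht₁, ht₂⟩)
  · rw [hclosure]
    exact ((hu.comp (f := fun p : ℝ × ℝ => (p.1, x₁)) (by fun_prop)
      fun p hp => ⟨hp.1, mem_univ _⟩).sub (hu.comp (f := fun p : ℝ × ℝ => (p.2, x₂)) (by fun_prop)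
      fun p hp => ⟨hp.2, mem_univ _⟩)).abs
  · have := Real.continuous_rpow_const hα
    unfold pd
    fun_prop

lemma hSemi_le_mul_rpow {T α B Y : ℝ} {u : ℝ → ℝ → ℝ} (hT : 0 < T) (hα0 : 0 < α) (hα1 : α ≤ 1)
    (hu : ContinuousOn (fun p : ℝ × ℝ => u p.1 p.2) (Icc 0 T ×ˢ univ)) (hB : 0 ≤ B) (hY : 0 ≤ Y)
    (hosc : ∀ t₁ ∈ Ioo 0 T, ∀ t₂ ∈ Ioo 0 T, ∀ x₁ x₂, |u t₁ x₁ - u t₂ x₂| ≤ B)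
    (hlip : ∀ t₁ ∈ Ioo 0 T, ∀ t₂ ∈ Ioo 0 T, ∀ x₁ x₂,
      |u t₁ x₁ - u t₂ x₂| ≤ B * (Y * pd t₁ x₁ t₂ x₂)) : hSemi T α u ≤ B * Y ^ α := by
  refine hSemi_le_of_forall_Ioo hT hα0.le hu (by positivity) fun t₁ ht₁ t₂ ht₂ x₁ x₂ => ?_
  rw [mul_assoc, ← Real.mul_rpow hY (pd_nonneg ..)]
  exact le_mul_rpow_of_le_of_le_mul (mul_nonneg hY (pd_nonneg ..)) hB hα0 hα1
    (hosc t₁ ht₁ t₂ ht₂ x₁ x₂) (hlip t₁ ht₁ t₂ ht₂ x₁ x₂)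

lemma MemC12a.hasParabolicDerivs {T α : ℝ} {u ut ux uxx : ℝ → ℝ → ℝ}
    (hu : MemC12a T α u ut ux uxx) : HasParabolicDerivs T u ut ux uxx where
  continuousOn := hu.memU.1
  hasDerivAt t ht x :=
    ⟨hu.hasUt t ht x, Eventually.of_forall (hu.hasUx t ht), hu.hasUxx t ht x⟩

namespace ScaleBounds

variable {T α K Y : ℝ} {u ut ux uxx : ℝ → ℝ → ℝ}

lemma abs_sub_le (h : ScaleBounds T K Y u ut ux uxx) (hu : HasParabolicDerivs T u ut ux uxx)
    (hK : 0 ≤ K) (hY : 0 ≤ Y) {t₁ t₂ : ℝ} (ht₁ : t₁ ∈ Ioo 0 T) (ht₂ : t₂ ∈ Ioo 0 T) (x₁ x₂ : ℝ) :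
    |u t₁ x₁ - u t₂ x₂| ≤ 2 * K * (Y * pd t₁ x₁ t₂ x₂) := by
  have hspace : |u t₁ x₁ - u t₁ x₂| ≤ K * Y * |x₁ - x₂| :=
    abs_sub_le_of_hasDerivAt_of_abs_le convex_univ
      (fun z _ => (hu.hasDerivAt t₁ ht₁ z).space.self_of_nhds)
      (fun z _ => h.abs_space_deriv_le t₁ ht₁ z) x₁ trivial x₂ trivial
  set q := Y * √|t₁ - t₂| with hq
  have hq_sq : q ^ 2 = Y ^ 2 * |t₁ - t₂| := by rw [mul_pow, Real.sq_sqrt (abs_nonneg _)]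
  have htime : |u t₁ x₂ - u t₂ x₂| ≤ K * q ^ 2 := by
    rw [hq_sq, ← mul_assoc]
    exact abs_sub_le_of_hasDerivAt_of_abs_le (convex_Ioo 0 T)
      (fun t ht => (hu.hasDerivAt t ht x₂).time) (fun t ht => h.abs_time_deriv_le t ht x₂)
      t₁ ht₁ t₂ ht₂
  have htime' : |u t₁ x₂ - u t₂ x₂| ≤ 2 * K * q := by
    have hq0 : 0 ≤ q := by positivity
    rcases le_total q 1 with hq1 | hq1
    · nlinarith [mul_nonneg (mul_nonneg hK hq0) (sub_nonneg.2 hq1), mul_nonneg hK hq0]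
    · calc |u t₁ x₂ - u t₂ x₂| ≤ 2 * K := (abs_sub _ _).trans
            (by linarith [h.abs_le t₁ ht₁ x₂, h.abs_le t₂ ht₂ x₂])
        _ ≤ 2 * K * q := le_mul_of_one_le_right (by positivity) hq1
  have hnonneg : 0 ≤ K * Y * |x₁ - x₂| := by positivity
  rw [pd, mul_add, ← hq]
  linarith [_root_.abs_sub_le (u t₁ x₁) (u t₁ x₂) (u t₂ x₂)]

lemma abs_space_deriv_time_sub_le (h : ScaleBounds T K Y u ut ux uxx)
    (hu : HasParabolicDerivs T u ut ux uxx) {t₁ t₂ : ℝ} (ht₁ : t₁ ∈ Ioo 0 T) (ht₂ : t₂ ∈ Ioo 0 T)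
    (x : ℝ) : |ux t₁ x - ux t₂ x| ≤ 4 * (K * Y ^ 2) * √|t₁ - t₂| := by
  rcases eq_or_ne t₁ t₂ with rfl | hne
  · simp
  have hpos : 0 < √|t₁ - t₂| := Real.sqrt_pos.2 (abs_pos.2 (sub_ne_zero.2 hne))
  have hspace : ∀ t ∈ Ioo 0 T, ∀ x y, |ux t x - ux t y| ≤ K * Y ^ 2 * |x - y| := fun t ht x y =>
    abs_sub_le_of_hasDerivAt_of_abs_le convex_univ (fun z _ => (hu.hasDerivAt t ht z).space₂)
      (fun z _ => h.abs_space_deriv₂_le t ht z) x trivial y trivial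
  calc |ux t₁ x - ux t₂ x|
      ≤ 2 * (K * Y ^ 2) * √|t₁ - t₂| + 2 * (K * Y ^ 2 * |t₁ - t₂|) / √|t₁ - t₂| :=
        abs_deriv_le_of_lipschitz_deriv (f := fun y => u t₁ y - u t₂ y)
          (f' := fun y => ux t₁ y - ux t₂ y)
          (fun y => (hu.hasDerivAt t₁ ht₁ y).space.self_of_nhds.sub
            (hu.hasDerivAt t₂ ht₂ y).space.self_of_nhds)
          (fun y => abs_sub_le_of_hasDerivAt_of_abs_le (convex_Ioo 0 T)
            (fun t ht => (hu.hasDerivAt t ht y).time) (fun t ht => h.abs_time_deriv_le t ht y)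
            t₁ ht₁ t₂ ht₂)
          (fun y z => by
            rw [sub_sub_sub_comm]
            linarith [abs_sub (ux t₁ y - ux t₁ z) (ux t₂ y - ux t₂ z), hspace t₁ ht₁ y z,
              hspace t₂ ht₂ y z])
          hpos x
    _ = 4 * (K * Y ^ 2) * √|t₁ - t₂| := by
        rw [mul_div_assoc, mul_div_assoc, Real.div_sqrt]
        ring

lemma abs_space_deriv_sub_le (h : ScaleBounds T K Y u ut ux uxx)
    (hu : HasParabolicDerivs T u ut ux uxx) (hK : 0 ≤ K) {t₁ t₂ : ℝ} (ht₁ : t₁ ∈ Ioo 0 T)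
    (ht₂ : t₂ ∈ Ioo 0 T) (x₁ x₂ : ℝ) :
    |ux t₁ x₁ - ux t₂ x₂| ≤ 4 * (K * Y) * (Y * pd t₁ x₁ t₂ x₂) := by
  have hspace : |ux t₁ x₁ - ux t₁ x₂| ≤ K * Y ^ 2 * |x₁ - x₂| :=
    abs_sub_le_of_hasDerivAt_of_abs_le convex_univ (fun z _ => (hu.hasDerivAt t₁ ht₁ z).space₂)
      (fun z _ => h.abs_space_deriv₂_le t₁ ht₁ z) x₁ trivial x₂ trivial
  have hnonneg : 0 ≤ K * Y ^ 2 * |x₁ - x₂| := by positivity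
  have htime := h.abs_space_deriv_time_sub_le hu ht₁ ht₂ x₂
  rw [pd]
  linarith [_root_.abs_sub_le (ux t₁ x₁) (ux t₁ x₂) (ux t₂ x₂)]

lemma hSemi_le (h : ScaleBounds T K Y u ut ux uxx) (hu : MemC12a T α u ut ux uxx) (hT : 0 < T)
    (hα0 : 0 < α) (hα1 : α ≤ 1) (hK : 0 ≤ K) (hY : 0 ≤ Y) :
    hSemi T α u ≤ 2 * K * Y ^ α :=
  hSemi_le_mul_rpow hT hα0 hα1 hu.memU.1 (by positivity) hY
    (fun t₁ ht₁ t₂ ht₂ x₁ x₂ => (abs_sub _ _).trans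
      (by linarith [h.abs_le t₁ ht₁ x₁, h.abs_le t₂ ht₂ x₂]))
    fun _ ht₁ _ ht₂ => h.abs_sub_le hu.hasParabolicDerivs hK hY ht₁ ht₂

lemma supN_space_deriv_le (h : ScaleBounds T K Y u ut ux uxx) (hu : MemC12a T α u ut ux uxx)
    (hT : 0 < T) (hK : 0 ≤ K) (hY : 0 ≤ Y) : supN T ux ≤ K * Y :=
  supN_le_of_forall_Ioo hT hu.memUx.1 (by positivity) h.abs_space_deriv_le

lemma hSemi_space_deriv_le (h : ScaleBounds T K Y u ut ux uxx) (hu : MemC12a T α u ut ux uxx)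
    (hT : 0 < T) (hα0 : 0 < α) (hα1 : α ≤ 1) (hK : 0 ≤ K) (hY : 0 < Y) :
    hSemi T α ux ≤ 4 * K * Y ^ (1 + α) := by
  have hKY : 0 ≤ K * Y := by positivity
  refine (hSemi_le_mul_rpow hT hα0 hα1 hu.memUx.1 (by positivity) hY.le
    (fun t₁ ht₁ t₂ ht₂ x₁ x₂ => (abs_sub _ _).trans
      (by linarith [h.abs_space_deriv_le t₁ ht₁ x₁, h.abs_space_deriv_le t₂ ht₂ x₂]))
    fun _ ht₁ _ ht₂ => h.abs_space_deriv_sub_le hu.hasParabolicDerivs hK ht₁ ht₂).trans_eq ?_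
  rw [Real.rpow_one_add' hY.le (by positivity)]
  ring

end ScaleBounds

/-! ### Terminal data -/

lemma gSupN_nonneg (g : ℝ → ℝ) : 0 ≤ gSupN g := Real.sInf_nonneg fun _ h => h.1

lemma gHSemi_nonneg (α : ℝ) (g : ℝ → ℝ) : 0 ≤ gHSemi α g := Real.sInf_nonneg fun _ h => h.1

lemma abs_le_gSupN {g : ℝ → ℝ} (hg : ∃ M, ∀ x, |g x| ≤ M) (x : ℝ) : |g x| ≤ gSupN g := by
  obtain ⟨M, hM⟩ := hg
  exact le_csInf ⟨|M|, abs_nonneg M, fun y => (hM y).trans (le_abs_self M)⟩ fun K hK => hK.2 x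

lemma gSupN_le_gNorm2a (α : ℝ) (g : ℝ → ℝ) : gSupN g ≤ gNorm2a α g := by
  unfold gNorm2a
  linarith [gSupN_nonneg (deriv g), gSupN_nonneg (deriv (deriv g)),
    gHSemi_nonneg α (deriv (deriv g))]

namespace MemC2a

variable {α : ℝ} {g : ℝ → ℝ}

lemma abs_le (hg : MemC2a α g) (x : ℝ) : |g x| ≤ gSupN g :=
  abs_le_gSupN (hg.2.1.imp fun _ h x => (h x).1) x

lemma abs_deriv_le (hg : MemC2a α g) (x : ℝ) : |deriv g x| ≤ gNorm2a α g := by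
  have := abs_le_gSupN (hg.2.1.imp fun _ h x => (h x).2.1) x
  unfold gNorm2a
  linarith [gSupN_nonneg g, gSupN_nonneg (deriv (deriv g)), gHSemi_nonneg α (deriv (deriv g))]

lemma abs_deriv_deriv_le (hg : MemC2a α g) (x : ℝ) : |deriv (deriv g) x| ≤ gNorm2a α g := by
  have := abs_le_gSupN (hg.2.1.imp fun _ h x => (h x).2.2) x
  unfold gNorm2a
  linarith [gSupN_nonneg g, gSupN_nonneg (deriv g), gHSemi_nonneg α (deriv (deriv g))]

lemma abs_sub_le (hg : MemC2a α g) (x y : ℝ) : |g x - g y| ≤ gNorm2a α g * |x - y| :=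
  abs_sub_le_of_hasDerivAt_of_abs_le convex_univ
    (fun z _ => (hg.1.differentiable two_ne_zero z).hasDerivAt) (fun z _ => hg.abs_deriv_le z)
    x trivial y trivial

lemma abs_deriv_sub_le (hg : MemC2a α g) (x y : ℝ) :
    |deriv g x - deriv g y| ≤ gNorm2a α g * |x - y| :=
  abs_sub_le_of_hasDerivAt_of_abs_le convex_univ
    (fun z _ => ((contDiff_succ_iff_deriv (n := 1)).1 hg.1 |>.2.2.differentiable
      one_ne_zero z).hasDerivAt)
    (fun z _ => hg.abs_deriv_deriv_le z) x trivial y trivial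

lemma abs_centralDiff₂_le (hg : MemC2a α g) (x : ℝ) {r s : ℝ} (hr : 0 ≤ r) (hs : 0 ≤ s) :
    |centralDiff₂ g x r s| ≤ 4 * gNorm2a α g * r * s := by
  have hderiv : ∀ z, HasDerivAt (fun y => centralDiff g y s) (centralDiff (deriv g) z s) z :=
    fun z => ((hg.1.differentiable two_ne_zero _).hasDerivAt.comp_add_const z s).sub
      ((hg.1.differentiable two_ne_zero _).hasDerivAt.comp_sub_const z s)
  calc |centralDiff₂ g x r s| ≤ 2 * gNorm2a α g * s * |x + r - (x - r)| :=
        abs_sub_le_of_hasDerivAt_of_abs_le convex_univ (fun z _ => hderiv z)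
          (fun z _ => abs_centralDiff_le_of_lipschitz hg.abs_deriv_sub_le z hs) _ trivial _ trivial
    _ = 4 * gNorm2a α g * r * s := by
        rw [add_sub_sub_cancel, abs_of_nonneg (add_nonneg hr hr)]
        ring

end MemC2a

/-! ### The Cauchy problem -/

lemma MemCa.exists_abs_le_Ioo {T α : ℝ} {u : ℝ → ℝ → ℝ} (hu : MemCa T α u) :
    ∃ W, ∀ t ∈ Ioo 0 T, ∀ x, |u t x| ≤ W :=
  hu.2.1.imp fun _ h t ht => h t (Ioo_subset_Icc_self ht)

lemma MemC12a.isHJBSolution {T α : ℝ} {lam E v vt vx vxx : ℝ → ℝ → ℝ}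
    (hv : MemC12a T α v vt vx vxx)
    (hequation : ∀ t ∈ Ioo 0 T, ∀ x,
      vt t x + 1 / 2 * vxx t x = lam t x * vx t x - lam t x ^ 2 / 2 + E t x) :
    IsHJBSolution T lam E v vt vx vxx where
  toHasParabolicDerivs := hv.hasParabolicDerivs
  bounded := hv.memU.exists_abs_le_Ioo
  bounded_space := hv.memUx.exists_abs_le_Ioo
  bounded_space₂ := hv.memUxx.exists_abs_le_Ioo
  equation := hequation

lemma MemCa.const_mul {T α : ℝ} {u : ℝ → ℝ → ℝ} (hu : MemCa T α u) (c : ℝ) :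
    MemCa T α (fun t x => c * u t x) := by
  obtain ⟨hcont, ⟨W, hW⟩, K, hK⟩ := hu
  refine ⟨hcont.const_smul c, ⟨|c| * W, fun t ht x => ?_⟩, |c| * K, fun t₁ ht₁ t₂ ht₂ x₁ x₂ => ?_⟩
  · rw [abs_mul]
    gcongr
    exact hW t ht x
  · rw [← mul_sub, abs_mul, mul_assoc]
    gcongr
    exact hK t₁ ht₁ t₂ ht₂ x₁ x₂

lemma MemC12a.const_mul {T α : ℝ} {u ut ux uxx : ℝ → ℝ → ℝ} (hu : MemC12a T α u ut ux uxx)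
    (c : ℝ) : MemC12a T α (fun t x => c * u t x) (fun t x => c * ut t x) (fun t x => c * ux t x)
      (fun t x => c * uxx t x) where
  memU := hu.memU.const_mul c
  memUt := hu.memUt.const_mul c
  memUx := hu.memUx.const_mul c
  memUxx := hu.memUxx.const_mul c
  hasUt t ht x := (hu.hasUt t ht x).const_mul c
  hasUx t ht x := (hu.hasUx t ht x).const_mul c
  hasUxx t ht x := (hu.hasUxx t ht x).const_mul c

lemma MemC2a.dataAtScale {T α γ m A N Y : ℝ} {lam u : ℝ → ℝ → ℝ} {g : ℝ → ℝ} (hg : MemC2a α g)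
    (hlam : MemCa T α lam) (hterminal : ∀ x, u T x = g x) (hα : 0 ≤ α) (hγ : 0 ≤ γ) (hY : 1 ≤ Y)
    (hN : hNorm T α lam ≤ N) (hNY : N ≤ α * Y / 16) (hgA : γ * gNorm2a α g ≤ A)
    (hm : ∀ t ∈ Ioo 0 T, ∀ x, |γ * u t x| ≤ m) :
    DataAtScale T α m A Y lam (fun t x => γ * u t x) where
  abs_drift_le t ht x := by
    unfold hNorm at hN
    linarith [hlam.abs_le_supN (Ioo_subset_Icc_self ht) x, hSemi_nonneg T α lam]
  abs_drift_sub_le t ht x y := by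
    have hsemi : hSemi T α lam ≤ α * Y / 16 := by
      unfold hNorm at hN
      linarith [supN_nonneg T lam]
    refine (hlam.abs_sub_le_hSemi_mul (Ioo_subset_Icc_self ht) x y).trans ?_
    gcongr
    exact le_mul_of_one_le_left (abs_nonneg _) hY
  abs_le := hm
  abs_terminal_sub_le x y := by
    have hA : 0 ≤ A :=
      (mul_nonneg hγ ((gSupN_nonneg g).trans (gSupN_le_gNorm2a α g))).trans hgA
    calc |γ * u T x - γ * u T y| = γ * |g x - g y| := by
          rw [hterminal, hterminal, ← mul_sub, abs_mul, abs_of_nonneg hγ]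
      _ ≤ γ * (gNorm2a α g * |x - y|) := by gcongr; exact hg.abs_sub_le x y
      _ ≤ A * |x - y| := by rw [← mul_assoc]; gcongr
      _ ≤ A * Y * |x - y| := by gcongr; exact le_mul_of_one_le_right hA hY
  abs_terminal_centralDiff₂_le x r s hr hs := by
    have hA : 0 ≤ A :=
      (mul_nonneg hγ ((gSupN_nonneg g).trans (gSupN_le_gNorm2a α g))).trans hgA
    have hlinear : centralDiff₂ (fun x => γ * u T x) x r s = γ * centralDiff₂ g x r s := by
      simp only [centralDiff₂, centralDiff, hterminal]
      ring
    calc |centralDiff₂ (fun x => γ * u T x) x r s| = γ * |centralDiff₂ g x r s| := by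
          rw [hlinear, abs_mul, abs_of_nonneg hγ]
      _ ≤ γ * (4 * gNorm2a α g * r * s) := by gcongr; exact hg.abs_centralDiff₂_le x hr hs
      _ = 4 * (γ * gNorm2a α g) * r * s := by ring
      _ ≤ 4 * (A * Y ^ 2) * r * s := by
          gcongr 4 * ?_ * r * s
          exact hgA.trans (le_mul_of_one_le_right hA (one_le_pow₀ hY))

/-- The exponent `M₀`, which bounds `γu⁰` and `γu¹`. -/
def growthExponent (T γ μ : ℝ) (lam0 lam1 : ℝ → ℝ → ℝ) (g0 g1 : ℝ → ℝ) : ℝ :=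
  γ * max (gSupN g0) (gSupN g1) + (1/2) * T * (max (supN T lam0) (supN T lam1))^2 + μ * T

/-- The Hölder size `M_α` of the data. -/
def dataSize (T α γ μ : ℝ) (lam0 lam1 : ℝ → ℝ → ℝ) (g0 g1 : ℝ → ℝ) : ℝ :=
  γ * max (gNorm2a α g0) (gNorm2a α g1)
    + (T + 1) * ((1/2) * (max (hNorm T α lam0) (hNorm T α lam1))^2 + μ)

/-- The inverse `Y` of the length scale at which the drift is absorbed by the heat operator. -/
def inverseLength (T α γ μ : ℝ) (lam0 lam1 : ℝ → ℝ → ℝ) (g0 g1 : ℝ → ℝ) : ℝ :=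
  16 / α * (1 + max (hNorm T α lam0) (hNorm T α lam1)) *
    Real.exp (growthExponent T γ μ lam0 lam1 g0 g1)

section DataSize

variable {T α γ μ : ℝ} (lam0 lam1 : ℝ → ℝ → ℝ) (g0 g1 : ℝ → ℝ)

lemma hNorm_nonneg (T α : ℝ) (u : ℝ → ℝ → ℝ) : 0 ≤ hNorm T α u :=
  add_nonneg (supN_nonneg T u) (hSemi_nonneg T α u)

lemma supN_le_hNorm (T α : ℝ) (u : ℝ → ℝ → ℝ) : supN T u ≤ hNorm T α u :=
  le_add_of_nonneg_right (hSemi_nonneg T α u)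

lemma growthExponent_nonneg (hT : 0 ≤ T) (hγ : 0 ≤ γ) (hμ : 0 ≤ μ) :
    0 ≤ growthExponent T γ μ lam0 lam1 g0 g1 := by
  have := le_max_of_le_left (c := gSupN g1) (gSupN_nonneg g0)
  unfold growthExponent
  positivity

lemma mul_max_gNorm2a_nonneg (hγ : 0 ≤ γ) : 0 ≤ γ * max (gNorm2a α g0) (gNorm2a α g1) :=
  mul_nonneg hγ (le_max_of_le_left ((gSupN_nonneg g0).trans (gSupN_le_gNorm2a α g0)))

lemma half_sq_add_le_dataSize (hT : 0 ≤ T) (hγ : 0 ≤ γ) (hμ : 0 ≤ μ) :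
    1 / 2 * max (hNorm T α lam0) (hNorm T α lam1) ^ 2 + μ ≤
      dataSize T α γ μ lam0 lam1 g0 g1 := by
  have : 0 ≤ T * (1 / 2 * max (hNorm T α lam0) (hNorm T α lam1) ^ 2 + μ) := by positivity
  unfold dataSize
  linarith [mul_max_gNorm2a_nonneg (α := α) g0 g1 hγ]

lemma dataSize_pos (hT : 0 ≤ T) (hγ : 0 ≤ γ) (hμ : 0 < μ) :
    0 < dataSize T α γ μ lam0 lam1 g0 g1 :=
  lt_of_lt_of_le (by positivity) (half_sq_add_le_dataSize lam0 lam1 g0 g1 hT hγ hμ.le)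

lemma mul_max_gNorm2a_le_dataSize (hT : 0 ≤ T) (hμ : 0 ≤ μ) :
    γ * max (gNorm2a α g0) (gNorm2a α g1) ≤ dataSize T α γ μ lam0 lam1 g0 g1 := by
  unfold dataSize
  exact le_add_of_nonneg_right (by positivity)

lemma growthExponent_le_dataSize (hT : 0 ≤ T) (hγ : 0 ≤ γ) (hμ : 0 ≤ μ) :
    growthExponent T γ μ lam0 lam1 g0 g1 ≤ dataSize T α γ μ lam0 lam1 g0 g1 := by
  have hg : γ * max (gSupN g0) (gSupN g1) ≤ γ * max (gNorm2a α g0) (gNorm2a α g1) := by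
    gcongr <;> exact gSupN_le_gNorm2a α _
  have hlam : T * max (supN T lam0) (supN T lam1) ^ 2 ≤
      T * max (hNorm T α lam0) (hNorm T α lam1) ^ 2 := by
    have := le_max_of_le_left (c := supN T lam1) (supN_nonneg T lam0)
    gcongr <;> exact supN_le_hNorm T α _
  unfold growthExponent dataSize
  nlinarith [sq_nonneg (max (hNorm T α lam0) (hNorm T α lam1))]

lemma one_add_hNorm_sq_le (hT : 0 ≤ T) (hγ : 0 ≤ γ) (hμ : 0 < μ) :
    (1 + max (hNorm T α lam0) (hNorm T α lam1)) ^ 2 ≤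
      (4 + 2 / μ) * dataSize T α γ μ lam0 lam1 g0 g1 := by
  have hM := half_sq_add_le_dataSize (α := α) lam0 lam1 g0 g1 hT hγ hμ.le
  set N := max (hNorm T α lam0) (hNorm T α lam1)
  set M := dataSize T α γ μ lam0 lam1 g0 g1
  have hμM : 2 ≤ 2 / μ * M := by
    rw [div_mul_eq_mul_div, le_div_iff₀ hμ]
    linarith [sq_nonneg N]
  calc (1 + N) ^ 2 ≤ 2 + 2 * N ^ 2 := by linarith [sq_nonneg (N - 1)]
    _ ≤ (4 + 2 / μ) * M := by linarith

lemma exp_growthExponent_le_inverseLength (hα0 : 0 < α) (hα1 : α ≤ 1) :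
    Real.exp (growthExponent T γ μ lam0 lam1 g0 g1) ≤ inverseLength T α γ μ lam0 lam1 g0 g1 := by
  have hN := le_max_of_le_left (c := hNorm T α lam1) (hNorm_nonneg T α lam0)
  have hα : 1 ≤ 16 / α := by rw [one_le_div hα0]; linarith
  exact le_mul_of_one_le_left (Real.exp_pos _).le (one_le_mul_of_one_le_of_one_le hα (by linarith))

lemma one_le_inverseLength (hT : 0 ≤ T) (hα0 : 0 < α) (hα1 : α ≤ 1) (hγ : 0 ≤ γ) (hμ : 0 ≤ μ) :
    1 ≤ inverseLength T α γ μ lam0 lam1 g0 g1 :=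
  (Real.one_le_exp (growthExponent_nonneg lam0 lam1 g0 g1 hT hγ hμ)).trans
    (exp_growthExponent_le_inverseLength lam0 lam1 g0 g1 hα0 hα1)

lemma max_hNorm_le_inverseLength (hT : 0 ≤ T) (hα : 0 < α) (hγ : 0 ≤ γ) (hμ : 0 ≤ μ) :
    max (hNorm T α lam0) (hNorm T α lam1) ≤ α * inverseLength T α γ μ lam0 lam1 g0 g1 / 16 := by
  have hN := le_max_of_le_left (c := hNorm T α lam1) (hNorm_nonneg T α lam0)
  have hexp := Real.one_le_exp (growthExponent_nonneg lam0 lam1 g0 g1 hT hγ hμ)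
  calc max (hNorm T α lam0) (hNorm T α lam1) ≤ 1 + max (hNorm T α lam0) (hNorm T α lam1) := by
        linarith
    _ ≤ (1 + max (hNorm T α lam0) (hNorm T α lam1)) *
        Real.exp (growthExponent T γ μ lam0 lam1 g0 g1) :=
        le_mul_of_one_le_right (by linarith) hexp
    _ = α * inverseLength T α γ μ lam0 lam1 g0 g1 / 16 := by
        unfold inverseLength
        field_simp

end DataSize

namespace SolvesPDDE

variable {T α γ μ : ℝ} {lam0 lam1 : ℝ → ℝ → ℝ} {g0 g1 : ℝ → ℝ}
  {u0 u0t u0x u0xx u1 u1t u1x u1xx : ℝ → ℝ → ℝ}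

lemma isHJBSolution_const_mul₁
    (h : SolvesPDDE T α γ μ lam0 lam1 g0 g1 u0 u0t u0x u0xx u1 u1t u1x u1xx) (hγ : 0 < γ) :
    IsHJBSolution T lam1 (fun _ _ => 0) (fun t x => γ * u1 t x) (fun t x => γ * u1t t x)
      (fun t x => γ * u1x t x) (fun t x => γ * u1xx t x) := by
  obtain ⟨-, hu1, heq1, -⟩ := h
  refine (hu1.const_mul γ).isHJBSolution fun t ht x => ?_
  have := heq1 t (Ioo_subset_Ico_self ht) x
  field_simp at this ⊢
  linarith

lemma isHJBSolution_const_mul₀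
    (h : SolvesPDDE T α γ μ lam0 lam1 g0 g1 u0 u0t u0x u0xx u1 u1t u1x u1xx) (hγ : 0 < γ) :
    IsHJBSolution T lam0 (jumpTerm μ (fun t x => γ * u0 t x) (fun t x => γ * u1 t x))
      (fun t x => γ * u0 t x) (fun t x => γ * u0t t x) (fun t x => γ * u0x t x)
      (fun t x => γ * u0xx t x) := by
  obtain ⟨hu0, -, -, -, heq0, -⟩ := h
  refine (hu0.const_mul γ).isHJBSolution fun t ht x => ?_
  have := heq0 t (Ioo_subset_Ico_self ht) x
  rw [show -γ * (u1 t x - u0 t x) = γ * u0 t x - γ * u1 t x by ring] at this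
  simp only [jumpTerm]
  field_simp at this ⊢
  linarith

lemma abs_const_mul_le
    (h : SolvesPDDE T α γ μ lam0 lam1 g0 g1 u0 u0t u0x u0xx u1 u1t u1x u1xx)
    (hlam0 : MemCa T α lam0) (hlam1 : MemCa T α lam1) (hg0 : MemC2a α g0) (hg1 : MemC2a α g1)
    (hγ : 0 < γ) (hμ : 0 ≤ μ) {t : ℝ} (ht : t ∈ Ioo 0 T) (x : ℝ) :
    |γ * u0 t x| ≤ growthExponent T γ μ lam0 lam1 g0 g1 ∧
      |γ * u1 t x| ≤ growthExponent T γ μ lam0 lam1 g0 g1 := by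
  have hterminal : ∀ {u : ℝ → ℝ → ℝ} {g : ℝ → ℝ}, MemC2a α g → (∀ x, u T x = g x) →
      gSupN g ≤ max (gSupN g0) (gSupN g1) →
      ∀ x, |γ * u T x| ≤ γ * max (gSupN g0) (gSupN g1) := fun hg hu hle x => by
    rw [abs_mul, abs_of_pos hγ, hu]
    gcongr
    exact (hg.abs_le x).trans hle
  exact (h.isHJBSolution_const_mul₀ hγ).abs_le_of_coupled (h.isHJBSolution_const_mul₁ hγ)
    (fun t ht x => (hlam0.abs_le_supN (Ioo_subset_Icc_self ht) x).trans (le_max_left _ _))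
    (fun t ht x => (hlam1.abs_le_supN (Ioo_subset_Icc_self ht) x).trans (le_max_right _ _))
    (hterminal hg0 h.2.2.2.2.2 (le_max_left _ _)) (hterminal hg1 h.2.2.2.1 (le_max_right _ _))
    hμ ht x

theorem scaleBounds
    (h : SolvesPDDE T α γ μ lam0 lam1 g0 g1 u0 u0t u0x u0xx u1 u1t u1x u1xx)
    (hlam0 : MemCa T α lam0) (hlam1 : MemCa T α lam1) (hg0 : MemC2a α g0) (hg1 : MemC2a α g1)
    (hT : 0 ≤ T) (hα0 : 0 < α) (hα1 : α ≤ 1) (hγ : 0 < γ) (hμ : 0 < μ) :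
    let K := 176 / α * (1 + 2 * μ) * (1 + 1 / μ) / γ * dataSize T α γ μ lam0 lam1 g0 g1
    let Y := inverseLength T α γ μ lam0 lam1 g0 g1
    ScaleBounds T K Y u0 u0t u0x u0xx ∧ ScaleBounds T K Y u1 u1t u1x u1xx := by
  intro K Y
  set M := dataSize T α γ μ lam0 lam1 g0 g1
  have hμM : μ ≤ M := (le_add_of_nonneg_left (by positivity)).trans
    (half_sq_add_le_dataSize lam0 lam1 g0 g1 hT hγ.le hμ.le)
  have hM_le : M ≤ (1 + 1 / μ) * M :=
    le_mul_of_one_le_left (hμ.le.trans hμM) (le_add_of_nonneg_right (by positivity))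
  have hμA : 1 + μ ≤ (1 + 1 / μ) * M := by
    have : 1 ≤ 1 / μ * M := by rwa [one_div_mul_eq_div, one_le_div hμ]
    linarith
  have hexpY := exp_growthExponent_le_inverseLength (T := T) (γ := γ) (μ := μ) lam0 lam1 g0 g1
    hα0 hα1
  have hY := one_le_inverseLength lam0 lam1 g0 g1 hT hα0 hα1 hγ.le hμ.le
  have hNY := max_hNorm_le_inverseLength lam0 lam1 g0 g1 hT hα0 hγ.le hμ.le
  have hgM := (mul_max_gNorm2a_le_dataSize (α := α) (γ := γ) lam0 lam1 g0 g1 hT hμ.le).trans hM_le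
  have hbounded := fun t (ht : t ∈ Ioo 0 T) x =>
    h.abs_const_mul_le hlam0 hlam1 hg0 hg1 hγ hμ.le ht x
  obtain ⟨hbounds₀, hbounds₁⟩ :=
    (h.isHJBSolution_const_mul₀ hγ).scaleBounds_of_coupled (h.isHJBSolution_const_mul₁ hγ)
      (hg0.dataAtScale hlam0 h.2.2.2.2.2 hα0.le hγ.le hY (le_max_left _ _) hNY
        ((mul_le_mul_of_nonneg_left (le_max_left _ _) hγ.le).trans hgM)
        fun t ht x => (hbounded t ht x).1)
      (hg1.dataAtScale hlam1 h.2.2.2.1 hα0.le hγ.le hY (le_max_right _ _) hNY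
        ((mul_le_mul_of_nonneg_left (le_max_right _ _) hγ.le).trans hgM)
        fun t ht x => (hbounded t ht x).2)
      hα0 hα1 hμ.le
      ((growthExponent_le_dataSize lam0 lam1 g0 g1 hT hγ.le hμ.le).trans hM_le) hμA hexpY
  have hK : K = 176 / α * (1 + 2 * μ) * ((1 + 1 / μ) * M) / γ := by ring
  exact hK ▸ ⟨hbounds₀.of_const_mul hγ, hbounds₁.of_const_mul hγ⟩

end SolvesPDDE

/- `Q² ≤ q M` turns `M * Q ^ β` into at most `q ^ (β / 2) * M ^ (1 + β / 2)`, and `1 ≤ q M` raises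
the exponent of `M` to `p`. -/
lemma mul_rpow_le_of_sq_le {k q M Q X p β : ℝ} (hk : 1 ≤ k) (hq : 1 ≤ q) (hM : 0 < M)
    (hQ : 0 < Q) (hX : 0 < X) (hQM : Q ^ 2 ≤ q * M) (hqM : 1 ≤ q * M) (hβ0 : 0 ≤ β) (hβ2 : β ≤ 2)
    (hβp : 1 + β / 2 ≤ p) : M * (k * Q * X) ^ β ≤ k ^ 2 * q ^ p * M ^ p * X ^ β := by
  have hqM0 : 0 ≤ q * M := by positivity
  have hkβ : k ^ β ≤ k ^ 2 := by
    rw [← Real.rpow_two]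
    exact Real.rpow_le_rpow_of_exponent_le hk hβ2
  have hQβ : Q ^ β ≤ (q * M) ^ (β / 2) :=
    calc Q ^ β = (Q ^ 2) ^ (β / 2) := by
          rw [← Real.rpow_two, ← Real.rpow_mul hQ.le, mul_div_cancel₀ _ two_ne_zero]
      _ ≤ (q * M) ^ (β / 2) := by gcongr
  have hMQ : M * Q ^ β ≤ q ^ p * M ^ p :=
    calc M * Q ^ β ≤ q * M * (q * M) ^ (β / 2) := by
          gcongr
          exact le_mul_of_one_le_left hM.le hq
      _ = (q * M) ^ (1 + β / 2) := (Real.rpow_one_add' hqM0 (by positivity)).symm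
      _ ≤ (q * M) ^ p := Real.rpow_le_rpow_of_exponent_le hqM hβp
      _ = q ^ p * M ^ p := Real.mul_rpow (by positivity) hM.le
  calc M * (k * Q * X) ^ β = k ^ β * (M * Q ^ β) * X ^ β := by
        rw [Real.mul_rpow (by positivity) hX.le, Real.mul_rpow (by positivity) hQ.le]
        ring
    _ ≤ k ^ 2 * (q ^ p * M ^ p) * X ^ β := by gcongr
    _ = k ^ 2 * q ^ p * M ^ p * X ^ β := by ring

lemma dataSize_mul_inverseLength_rpow_le {T α γ μ β : ℝ} (lam0 lam1 : ℝ → ℝ → ℝ) (g0 g1 : ℝ → ℝ)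
    (hT : 0 ≤ T) (hα0 : 0 < α) (hα1 : α ≤ 1) (hγ : 0 ≤ γ) (hμ : 0 < μ) (hβ0 : 0 ≤ β)
    (hβα : β ≤ 1 + α) :
    dataSize T α γ μ lam0 lam1 g0 g1 * inverseLength T α γ μ lam0 lam1 g0 g1 ^ β ≤
      (16 / α) ^ 2 * (4 + 2 / μ) ^ (2 + α / 2) *
        dataSize T α γ μ lam0 lam1 g0 g1 ^ (2 + α / 2) *
        Real.exp (β * growthExponent T γ μ lam0 lam1 g0 g1) := by
  have hN := le_max_of_le_left (c := hNorm T α lam1) (hNorm_nonneg T α lam0)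
  have hNM := one_add_hNorm_sq_le (α := α) lam0 lam1 g0 g1 hT hγ hμ
  have hq : 1 ≤ 4 + 2 / μ := by linarith [div_pos two_pos hμ]
  rw [mul_comm β, Real.exp_mul]
  exact mul_rpow_le_of_sq_le (by rw [one_le_div hα0]; linarith) hq
    (dataSize_pos lam0 lam1 g0 g1 hT hγ hμ) (by linarith)
    (Real.exp_pos _) hNM ((one_le_pow₀ (by linarith)).trans hNM) hβ0 (by linarith) (by linarith)

lemma ScaleBounds.holder_estimates {T α K Y : ℝ} {u ut ux uxx : ℝ → ℝ → ℝ}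
    (h : ScaleBounds T K Y u ut ux uxx) (hu : MemC12a T α u ut ux uxx) (hT : 0 < T)
    (hα0 : 0 < α) (hα1 : α ≤ 1) (hK : 0 ≤ K) (hY : 1 ≤ Y) :
    hSemi T α u ≤ 5 * (K * Y ^ α) ∧ supN T ux ≤ 5 * (K * Y ^ (1 : ℝ)) ∧
      hSemi T α ux ≤ 5 * (K * Y ^ (1 + α)) ∧ hNorm T α ux ≤ 5 * (K * Y ^ (1 + α)) := by
  have hY0 : 0 < Y := by linarith
  have hKYα : 0 ≤ K * Y ^ α := by positivity
  have hKY : 0 ≤ K * Y := by positivity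
  have hKY_le : K * Y ≤ K * Y ^ (1 + α) := by
    gcongr
    exact Real.self_le_rpow_of_one_le hY (by linarith)
  have hu_semi := h.hSemi_le hu hT hα0 hα1 hK hY0.le
  have hux_sup := h.supN_space_deriv_le hu hT hK hY0.le
  have hux_semi := h.hSemi_space_deriv_le hu hT hα0 hα1 hK hY0
  rw [Real.rpow_one]
  unfold hNorm
  exact ⟨by linarith, by linarith, by linarith, by linarith⟩

theorem ScaleBounds.gradient_estimates {T α γ μ c : ℝ} {lam0 lam1 : ℝ → ℝ → ℝ} {g0 g1 : ℝ → ℝ}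
    {u ut ux uxx : ℝ → ℝ → ℝ}
    (h : ScaleBounds T (c * dataSize T α γ μ lam0 lam1 g0 g1)
      (inverseLength T α γ μ lam0 lam1 g0 g1) u ut ux uxx)
    (hu : MemC12a T α u ut ux uxx) (hT : 0 < T) (hα0 : 0 < α) (hα1 : α ≤ 1) (hγ : 0 ≤ γ)
    (hμ : 0 < μ) (hc : 0 ≤ c) :
    let M₀ := growthExponent T γ μ lam0 lam1 g0 g1
    let B := 5 * c * ((16 / α) ^ 2 * (4 + 2 / μ) ^ (2 + α / 2)) *
      dataSize T α γ μ lam0 lam1 g0 g1 ^ (2 + α / 2)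
    hSemi T α u ≤ B * Real.exp (α * M₀) ∧ supN T ux ≤ B * Real.exp M₀ ∧
      hSemi T α ux ≤ B * Real.exp ((1 + α) * M₀) ∧ hNorm T α ux ≤ B * Real.exp ((1 + α) * M₀) := by
  intro M₀ B
  set M := dataSize T α γ μ lam0 lam1 g0 g1
  set Y := inverseLength T α γ μ lam0 lam1 g0 g1
  have hscale : ∀ β, 0 ≤ β → β ≤ 1 + α → 5 * (c * M * Y ^ β) ≤ B * Real.exp (β * M₀) :=
    fun β hβ0 hβα =>
    calc 5 * (c * M * Y ^ β) = 5 * c * (M * Y ^ β) := by ring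
      _ ≤ 5 * c * ((16 / α) ^ 2 * (4 + 2 / μ) ^ (2 + α / 2) * M ^ (2 + α / 2) *
          Real.exp (β * M₀)) := by
        gcongr 5 * c * ?_
        exact dataSize_mul_inverseLength_rpow_le lam0 lam1 g0 g1 hT.le hα0 hα1 hγ hμ hβ0 hβα
      _ = B * Real.exp (β * M₀) := by ring
  have hone := hscale 1 zero_le_one (by linarith)
  rw [one_mul] at hone
  have htop := hscale (1 + α) (by linarith) le_rfl
  obtain ⟨hu_semi, hux, hux_semi, hux_norm⟩ := h.holder_estimates hu hT hα0 hα1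
    (mul_nonneg hc (dataSize_pos lam0 lam1 g0 g1 hT.le hγ hμ).le)
    (one_le_inverseLength lam0 lam1 g0 g1 hT.le hα0 hα1 hγ hμ.le)
  exact ⟨hu_semi.trans (hscale α hα0.le (by linarith)), hux.trans hone, hux_semi.trans htop,
    hux_norm.trans htop⟩

/-- gradient estimates for the solution of the PDDE Cauchy problem. -/
theorem stmt_7 (α γ μ : ℝ) (hα0 : 0 < α) (hα1 : α ≤ 1) (hγ : 0 < γ) (hμ : 0 < μ) :
    ∃ C : ℝ, 0 < C ∧
      ∀ T : ℝ, 0 < T →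
      ∀ (lam0 lam1 : ℝ → ℝ → ℝ) (g0 g1 : ℝ → ℝ),
        MemCa T α lam0 → MemCa T α lam1 → MemC2a α g0 → MemC2a α g1 →
      ∀ u0 u0t u0x u0xx u1 u1t u1x u1xx : ℝ → ℝ → ℝ,
        SolvesPDDE T α γ μ lam0 lam1 g0 g1 u0 u0t u0x u0xx u1 u1t u1x u1xx →
        max (hSemi T α u0) (hSemi T α u1) ≤
          C * (γ * max (gNorm2a α g0) (gNorm2a α g1) + (T + 1) * ((1/2) * (max (hNorm T α lam0) (hNorm T α lam1))^2 + μ)) ^ (2 + α/2) * Real.exp (α * (γ * max (gSupN g0) (gSupN g1) + (1/2) * T * (max (supN T lam0) (supN T lam1))^2 + μ * T)) ∧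
        max (supN T u0x) (supN T u1x) ≤
          C * (γ * max (gNorm2a α g0) (gNorm2a α g1) + (T + 1) * ((1/2) * (max (hNorm T α lam0) (hNorm T α lam1))^2 + μ)) ^ (2 + α/2) * Real.exp (γ * max (gSupN g0) (gSupN g1) + (1/2) * T * (max (supN T lam0) (supN T lam1))^2 + μ * T) ∧
        max (hSemi T α u0x) (hSemi T α u1x) ≤
          C * (γ * max (gNorm2a α g0) (gNorm2a α g1) + (T + 1) * ((1/2) * (max (hNorm T α lam0) (hNorm T α lam1))^2 + μ)) ^ (2 + α/2) * Real.exp ((1 + α) * (γ * max (gSupN g0) (gSupN g1) + (1/2) * T * (max (supN T lam0) (supN T lam1))^2 + μ * T)) ∧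
        max (hNorm T α u0x) (hNorm T α u1x) ≤
          C * (γ * max (gNorm2a α g0) (gNorm2a α g1) + (T + 1) * ((1/2) * (max (hNorm T α lam0) (hNorm T α lam1))^2 + μ)) ^ (2 + α/2) * Real.exp ((1 + α) * (γ * max (gSupN g0) (gSupN g1) + (1/2) * T * (max (supN T lam0) (supN T lam1))^2 + μ * T)) := by
  let c := 176 / α * (1 + 2 * μ) * (1 + 1 / μ) / γ
  have hc : 0 ≤ c := by positivity
  refine ⟨5 * c * ((16 / α) ^ 2 * (4 + 2 / μ) ^ (2 + α / 2)), by positivity, ?_⟩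
  intro T hT lam0 lam1 g0 g1 hlam0 hlam1 hg0 hg1 u0 u0t u0x u0xx u1 u1t u1x u1xx hsol
  obtain ⟨hbounds0, hbounds1⟩ := hsol.scaleBounds hlam0 hlam1 hg0 hg1 hT.le hα0 hα1 hγ hμ
  obtain ⟨hu0, hu0x, hu0x_semi, hu0x_norm⟩ :=
    hbounds0.gradient_estimates hsol.1 hT hα0 hα1 hγ.le hμ hc
  obtain ⟨hu1, hu1x, hu1x_semi, hu1x_norm⟩ :=
    hbounds1.gradient_estimates hsol.2.1 hT hα0 hα1 hγ.le hμ hc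
  exact ⟨max_le hu0 hu1, max_le hu0x hu1x, max_le hu0x_semi hu1x_semi, max_le hu0x_norm hu1x_norm⟩
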